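/- arXiv:cs/0011023 — 8 statements merged into one kernel-verified Lean document; each statement's English description precedes it below -/
import Mathlib

section
/- Let s(v) = (81/2)·v/(2 − 3v) and h(x,y,z) = s(|x−y| + |y−z| + |z−x|). Then h(x,y,z) ≥ 0 for all (x,y,z) in the cube C = [0,1/3]^3, and the Lebesgue integral of h over C equals 1; that is, h is a joint probability density function on C. -/
open MeasureTheory

open Set Function
open scoped ENNReal

/-!
Almost surely the points of an independent sample from an atomless measure `μ` are distinct, so the
positions `(i, j)` of the smallest and the largest of `n` points partition the sample space up to a
null set. On each of the `n * (n - 1)` pieces, given the minimum `u` and the maximum `v`, the other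
points range over `Ioo u v`. Hence the pair of extremes has density
`n * (n - 1) * μ (Ioo u v) ^ (n - 2)` on `u < v`, and the range of `n` points of an interval of
length `L` has density `n * (n - 1) * (L - r) * r ^ (n - 2)` with respect to `r`.

For three points, `|x - y| + |y - z| + |z - x|` is twice the range `r`. Since `L - r` cancels the
singular denominator of `2 * r / (2 * L - 2 * r)`, what remains is the integral of `6 * r ^ 2` over
`0 < r < L`, which is `2 * L ^ 3`.
-/

section Injective

variable {ι α : Type*} [Fintype ι] [MeasurableSpace α] [MeasurableEq α]
  (μ : Measure α) [SigmaFinite μ] [NullSingletonClass μ]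

theorem ae_pi_ne {i j : ι} (hij : i ≠ j) : ∀ᵐ x : ι → α ∂Measure.pi fun _ ↦ μ, x i ≠ x j := by
  classical
  have hs : MeasurableSet {x : ι → α | x i = x j} :=
    measurableSet_eq_fun (measurable_pi_apply i) (measurable_pi_apply j)
  have slice_null (x : ι → α) :
      ∫⁻ t, {x : ι → α | x i = x j}.indicator 1 (update x j t) ∂μ = 0 := by
    refine lintegral_eq_zero_of_ae_eq_zero ?_
    filter_upwards [μ.ae_ne (x i)] with t ht
    simp [hij, ht.symm]
  suffices Measure.pi (fun _ ↦ μ) {x : ι → α | x i = x j} = 0 by simpa [ae_iff] using this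
  rw [← lintegral_indicator_one hs]
  rcases isEmpty_or_nonempty (ι → α) with _ | ⟨⟨x⟩⟩
  · exact lintegral_of_isEmpty _ _
  rw [lintegral_eq_lmarginal_univ x,
    lmarginal_erase' _ (measurable_one.indicator hs) (Finset.mem_univ j)]
  simp only [slice_null, lmarginal, lintegral_zero]

theorem ae_pi_injective : ∀ᵐ x : ι → α ∂Measure.pi fun _ ↦ μ, Injective x := by
  have coords_ne : ∀ᵐ x : ι → α ∂Measure.pi fun _ ↦ μ, ∀ i j, i ≠ j → x i ≠ x j := by
    simpa only [ae_all_iff] using fun i j ↦ ae_pi_ne μ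
  filter_upwards [coords_ne] with x hx i j
  exact not_imp_not.mp (hx i j)

end Injective

section ExtremalSet

variable {ι α : Type*}

/-- The families `x` with strict minimum `x i` and strict maximum `x j`. As `(i, j)` varies, these
sets partition the injective families indexed by a finite type with at least two elements. -/
def extremalSet [Preorder α] (i j : ι) : Set (ι → α) :=
  {x | x i < x j ∧ ∀ k, k ≠ i → k ≠ j → x k ∈ Ioo (x i) (x j)}

namespace extremalSet

section LinearOrder

variable [LinearOrder α] {i j k : ι} {x : ι → α}

theorem left_lt (hx : x ∈ extremalSet i j) (hk : k ≠ i) : x i < x k := by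
  rcases eq_or_ne k j with rfl | hkj
  exacts [hx.1, (hx.2 k hk hkj).1]

theorem lt_right (hx : x ∈ extremalSet i j) (hk : k ≠ j) : x k < x j := by
  rcases eq_or_ne k i with rfl | hki
  exacts [hx.1, (hx.2 k hki hk).2]

theorem pair_unique {p q : ι × ι} (hp : x ∈ extremalSet p.1 p.2) (hq : x ∈ extremalSet q.1 q.2) :
    p = q := by
  ext
  · by_contra h
    exact (left_lt hp (Ne.symm h)).asymm (left_lt hq h)
  · by_contra h
    exact (lt_right hp (Ne.symm h)).asymm (lt_right hq h)

theorem exists_mem_of_injective [Finite ι] [Nontrivial ι] (hx : Injective x) :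
    ∃ p : ι × ι, p.1 ≠ p.2 ∧ x ∈ extremalSet p.1 p.2 := by
  obtain ⟨i, hi⟩ := Finite.exists_min x
  obtain ⟨j, hj⟩ := Finite.exists_max x
  have lt_of_ne_min {k} (hk : k ≠ i) : x i < x k := (hi k).lt_of_ne (hx.ne hk.symm)
  have lt_of_ne_max {k} (hk : k ≠ j) : x k < x j := (hj k).lt_of_ne (hx.ne hk)
  obtain ⟨k, hk⟩ := exists_ne i
  have hij : x i < x j := (lt_of_ne_min hk).trans_le (hj k)
  exact ⟨(i, j), ne_of_apply_ne x hij.ne, hij, fun k hki hkj ↦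
    ⟨lt_of_ne_min hki, lt_of_ne_max hkj⟩⟩

protected theorem measurableSet [TopologicalSpace α] [OrderClosedTopology α]
    [SecondCountableTopology α] [MeasurableSpace α] [OpensMeasurableSpace α] [Finite ι] (i j : ι) :
    MeasurableSet (extremalSet i j : Set (ι → α)) := by
  have lt_measurable (k l : ι) : MeasurableSet {x : ι → α | x k < x l} :=
    measurableSet_lt (measurable_pi_apply k) (measurable_pi_apply l)
  simp only [extremalSet, ofPred_and, ofPred_forall]
  exact (lt_measurable i j).inter <| .iInter fun k ↦ .iInter fun _ ↦ .iInter fun _ ↦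
    (lt_measurable i k).inter (lt_measurable k j)

end LinearOrder

section ConditionallyCompleteLinearOrder

variable [ConditionallyCompleteLinearOrder α] {i j : ι} {x : ι → α}

theorem iInf_eq (hx : x ∈ extremalSet i j) : ⨅ k, x k = x i :=
  IsLeast.csInf_eq ⟨mem_range_self i, forall_mem_range.2 fun k ↦
    (eq_or_ne k i).elim (fun h ↦ h ▸ le_rfl) fun h ↦ (left_lt hx h).le⟩

theorem iSup_eq (hx : x ∈ extremalSet i j) : ⨆ k, x k = x j :=
  IsGreatest.csSup_eq ⟨mem_range_self j, forall_mem_range.2 fun k ↦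
    (eq_or_ne k j).elim (fun h ↦ h ▸ le_rfl) fun h ↦ (lt_right hx h).le⟩

end ConditionallyCompleteLinearOrder

end extremalSet

end ExtremalSet

section Lintegral

variable {ι α : Type*} [Fintype ι] [MeasurableSpace α] (μ : Measure α) [SigmaFinite μ]

theorem lintegral_pi_eq_lintegral_lintegral_lmarginal [DecidableEq ι] {f : (ι → α) → ℝ≥0∞}
    (hf : Measurable f) {i j : ι} (hij : i ≠ j) (x : ι → α) :
    ∫⁻ y, f y ∂Measure.pi (fun _ ↦ μ) = ∫⁻ u, ∫⁻ v,
      (∫⋯∫⁻_{i, j}ᶜ, f ∂fun _ ↦ μ) (update (update x i u) j v) ∂μ ∂μ := by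
  have univ_eq : (Finset.univ : Finset ι) = insert i (insert j {i, j}ᶜ) := by
    grind [Finset.mem_compl]
  rw [lintegral_eq_lmarginal_univ x, univ_eq, lmarginal_insert f hf (by simp [hij])]
  simp_rw [lmarginal_insert (s := {i, j}ᶜ) f hf (i := j) (by simp)]

variable [TopologicalSpace α] [OpensMeasurableSpace α] {φ : α → α → ℝ≥0∞}

section LinearOrder

variable [LinearOrder α] [OrderClosedTopology α] {i j : ι}

theorem lmarginal_indicator_extremalSet [DecidableEq ι] (hij : i ≠ j) (x : ι → α) :
    (∫⋯∫⁻_{i, j}ᶜ, (extremalSet i j).indicator (fun y ↦ φ (y i) (y j)) ∂fun _ ↦ μ) x =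
      (Ioi (x i)).indicator (fun v ↦ μ (Ioo (x i) v) ^ (Fintype.card ι - 2) * φ (x i) v) (x j) := by
  by_cases hx : x i < x j
  · have integrand_eq (y : ({i, j}ᶜ : Finset ι) → α) :
        (extremalSet i j).indicator (fun y ↦ φ (y i) (y j)) (updateFinset x {i, j}ᶜ y) =
          (univ.pi fun _ ↦ Ioo (x i) (x j)).indicator (fun _ ↦ φ (x i) (x j)) y := by
      have mem_extremalSet_iff : updateFinset x {i, j}ᶜ y ∈ extremalSet i j ↔
          y ∈ univ.pi fun _ ↦ Ioo (x i) (x j) := by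
        simp +contextual [extremalSet, updateFinset, hx, -mem_Ioo]
      by_cases hy : y ∈ univ.pi fun _ ↦ Ioo (x i) (x j)
      · rw [indicator_of_mem (mem_extremalSet_iff.2 hy), indicator_of_mem hy]
        simp [updateFinset]
      · rw [indicator_of_notMem (mt mem_extremalSet_iff.1 hy), indicator_of_notMem hy]
    simp only [lmarginal, integrand_eq]
    rw [lintegral_indicator_const (.univ_pi fun _ ↦ measurableSet_Ioo), Measure.pi_pi,
      indicator_of_mem (mem_Ioi.2 hx), mul_comm, Finset.prod_const, Finset.card_univ,
      Fintype.card_coe, Finset.card_compl, Finset.card_pair hij]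
  · simp [lmarginal, indicator, extremalSet, updateFinset, hx]

theorem setLIntegral_extremalSet [SecondCountableTopology α] (hφ : Measurable (uncurry φ))
    (hij : i ≠ j) :
    ∫⁻ x in extremalSet i j, φ (x i) (x j) ∂Measure.pi (fun _ ↦ μ) =
      ∫⁻ u, ∫⁻ v in Ioi u, μ (Ioo u v) ^ (Fintype.card ι - 2) * φ u v ∂μ ∂μ := by
  classical
  rcases isEmpty_or_nonempty α with _ | ⟨⟨a⟩⟩
  · have : IsEmpty (ι → α) := ⟨fun x ↦ isEmptyElim (x i)⟩
    simp
  have hf : Measurable fun x : ι → α ↦ φ (x i) (x j) := by fun_prop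
  rw [← lintegral_indicator (extremalSet.measurableSet i j),
    lintegral_pi_eq_lintegral_lintegral_lmarginal μ (hf.indicator (extremalSet.measurableSet i j))
      hij fun _ ↦ a]
  simp_rw [lmarginal_indicator_extremalSet μ hij, update_self, update_of_ne hij, update_self,
    lintegral_indicator measurableSet_Ioi]

end LinearOrder

theorem lintegral_iInf_iSup [Nontrivial ι] [ConditionallyCompleteLinearOrder α]
    [OrderClosedTopology α] [SecondCountableTopology α] [NullSingletonClass μ]
    (hφ : Measurable (uncurry φ)) :
    ∫⁻ x : ι → α, φ (⨅ k, x k) (⨆ k, x k) ∂Measure.pi (fun _ ↦ μ) =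
      (Fintype.card ι * (Fintype.card ι - 1) : ℕ) *
        ∫⁻ u, ∫⁻ v in Ioi u, μ (Ioo u v) ^ (Fintype.card ι - 2) * φ u v ∂μ ∂μ := by
  classical
  have disjoint : PairwiseDisjoint (↑(Finset.univ : Finset ι).offDiag)
      fun p : ι × ι ↦ (extremalSet p.1 p.2 : Set (ι → α)) := fun p _ q _ hpq ↦
    disjoint_left.2 fun _ hp hq ↦ hpq (extremalSet.pair_unique hp hq)
  have cover : (⋃ p ∈ (Finset.univ : Finset ι).offDiag, extremalSet p.1 p.2) =ᵐ[
      Measure.pi fun _ ↦ μ] (univ : Set (ι → α)) := by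
    refine Filter.eventuallyEq_univ.2 ?_
    filter_upwards [ae_pi_injective μ] with x hx
    simpa using extremalSet.exists_mem_of_injective hx
  calc ∫⁻ x : ι → α, φ (⨅ k, x k) (⨆ k, x k) ∂Measure.pi (fun _ ↦ μ)
      = ∑ p ∈ (Finset.univ : Finset ι).offDiag,
          ∫⁻ x in extremalSet p.1 p.2, φ (⨅ k, x k) (⨆ k, x k) ∂Measure.pi (fun _ ↦ μ) := by
        rw [← setLIntegral_univ, ← setLIntegral_congr cover, lintegral_biUnion_finset disjoint
          fun p _ ↦ extremalSet.measurableSet p.1 p.2]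
    _ = ∑ _p ∈ (Finset.univ : Finset ι).offDiag,
          ∫⁻ u, ∫⁻ v in Ioi u, μ (Ioo u v) ^ (Fintype.card ι - 2) * φ u v ∂μ ∂μ := by
        refine Finset.sum_congr rfl fun p hp ↦ ?_
        rw [← setLIntegral_extremalSet μ hφ (Finset.mem_offDiag.1 hp).2.2]
        refine setLIntegral_congr_fun (extremalSet.measurableSet p.1 p.2) fun x hx ↦ ?_
        simp only [extremalSet.iInf_eq hx, extremalSet.iSup_eq hx]
    _ = (Fintype.card ι * (Fintype.card ι - 1) : ℕ) *
          ∫⁻ u, ∫⁻ v in Ioi u, μ (Ioo u v) ^ (Fintype.card ι - 2) * φ u v ∂μ ∂μ := by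
        rw [Finset.sum_const, Finset.offDiag_card, Finset.card_univ, nsmul_eq_mul,
          Nat.mul_sub_one]

end Lintegral

section Real

theorem setLIntegral_Icc_Ioc_sub {ψ : ℝ → ℝ≥0∞} (hψ : Measurable ψ) (a b : ℝ) :
    ∫⁻ u in Icc a b, ∫⁻ v in Ioc u b, ψ (v - u) =
      ∫⁻ r in Ioo 0 (b - a), ENNReal.ofReal (b - a - r) * ψ r := by
  set T : Set (ℝ × ℝ) := {p | a ≤ p.1 ∧ 0 < p.2 ∧ p.1 + p.2 ≤ b}
  have hT : MeasurableSet T := by measurability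
  have inner_eq (u : ℝ) : (Icc a b).indicator (fun u ↦ ∫⁻ v in Ioc u b, ψ (v - u)) u =
      ∫⁻ r, T.indicator (fun p ↦ ψ p.2) (u, r) := by
    by_cases hu : u ∈ Icc a b
    · rw [indicator_of_mem hu, ← lintegral_indicator measurableSet_Ioc,
        ← lintegral_add_right_eq_self _ u]
      congr with r
      simp only [indicator, T, mem_Ioc, mem_ofPred_eq, add_sub_cancel_right]
      grind
    · have notMem (r : ℝ) : (u, r) ∉ T := by grind
      simp only [indicator_of_notMem hu, indicator_of_notMem (notMem _), lintegral_zero]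
  have outer_eq (r : ℝ) : ∫⁻ u, T.indicator (fun p ↦ ψ p.2) (u, r) =
      (Ioo 0 (b - a)).indicator (fun r ↦ ENNReal.ofReal (b - a - r) * ψ r) r := by
    by_cases hr : r ∈ Ioo 0 (b - a)
    · have slice_eq : (fun u ↦ T.indicator (fun p ↦ ψ p.2) (u, r)) =
          (Icc a (b - r)).indicator fun _ ↦ ψ r := by
        ext u
        simp only [indicator, T, mem_Icc, mem_ofPred_eq]
        grind
      rw [slice_eq, lintegral_indicator_const measurableSet_Icc, Real.volume_Icc,
        indicator_of_mem hr, mul_comm, sub_right_comm]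
    · have slice_ae_zero : ∀ᵐ u, T.indicator (fun p ↦ ψ p.2) (u, r) = 0 := by
        -- For `r = b - a` the slice may be the single point `a`; otherwise it is empty.
        filter_upwards [Measure.ae_ne volume a] with u hu
        exact indicator_of_notMem (by grind) _
      rw [indicator_of_notMem hr, lintegral_eq_zero_of_ae_eq_zero slice_ae_zero]
  rw [← lintegral_indicator measurableSet_Icc, ← lintegral_indicator measurableSet_Ioo]
  simp_rw [inner_eq, ← outer_eq]
  exact lintegral_lintegral_swap
    ((hψ.comp measurable_snd).indicator hT).aemeasurable

theorem setLIntegral_Icc_iSup_sub_iInf {ι : Type*} [Fintype ι] [Nontrivial ι] {g : ℝ → ℝ≥0∞}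
    (hg : Measurable g) (a b : ℝ) :
    ∫⁻ x : ι → ℝ in univ.pi fun _ ↦ Icc a b, g ((⨆ k, x k) - ⨅ k, x k) =
      (Fintype.card ι * (Fintype.card ι - 1) : ℕ) * ∫⁻ r in Ioo 0 (b - a),
        ENNReal.ofReal (b - a - r) * (ENNReal.ofReal r ^ (Fintype.card ι - 2) * g r) := by
  have inner_eq : ∀ u ∈ Icc a b, ∫⁻ v in Ioi u, (volume.restrict (Icc a b)) (Ioo u v) ^
      (Fintype.card ι - 2) * g (v - u) ∂volume.restrict (Icc a b) =
      ∫⁻ v in Ioc u b, ENNReal.ofReal (v - u) ^ (Fintype.card ι - 2) * g (v - u) := by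
    intro u hu
    have Ioi_inter : Ioi u ∩ Icc a b = Ioc u b := by grind
    rw [Measure.restrict_restrict measurableSet_Ioi, Ioi_inter]
    refine setLIntegral_congr_fun measurableSet_Ioc fun v hv ↦ ?_
    have Ioo_subset : Ioo u v ⊆ Icc a b := by grind
    simp only [Measure.restrict_eq_self _ Ioo_subset, Real.volume_Ioo]
  rw [volume_pi, Measure.restrict_pi_pi, lintegral_iInf_iSup (volume.restrict (Icc a b))
    (φ := fun u v ↦ g (v - u)) (by fun_prop), setLIntegral_congr_fun measurableSet_Icc inner_eq,
    setLIntegral_Icc_Ioc_sub (ψ := fun r ↦ ENNReal.ofReal r ^ (Fintype.card ι - 2) * g r)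
      (by fun_prop)]

theorem setLIntegral_Ioo_pow {b : ℝ} (hb : 0 ≤ b) (n : ℕ) :
    ∫⁻ r in Ioo 0 b, ENNReal.ofReal (r ^ n) = ENNReal.ofReal (b ^ (n + 1) / (n + 1)) := by
  rw [← ofReal_integral_eq_lintegral_ofReal, ← integral_Ioc_eq_integral_Ioo,
    ← intervalIntegral.integral_of_le hb, integral_pow]
  · simp
  · exact ((continuous_pow n).integrableOn_Icc).mono_set Ioo_subset_Icc_self
  · filter_upwards [ae_restrict_mem measurableSet_Ioo] with r hr
    exact pow_nonneg hr.1.le n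

end Real

section TourLength

/-- The length of the closed tour `x → y → z → x` on the line, that is, twice the range of the
triple; it is the argument of `s` in the formula for the density `h`. -/
def tourLength (x y z : ℝ) : ℝ := |x - y| + |y - z| + |z - x|

namespace tourLength

variable {x y z a b : ℝ}

theorem eq_two_mul_iSup_sub_iInf (x : Fin 3 → ℝ) :
    tourLength (x 0) (x 1) (x 2) = 2 * ((⨆ k, x k) - ⨅ k, x k) := by
  obtain ⟨i, hi⟩ := exists_eq_ciInf_of_finite (f := x)
  obtain ⟨j, hj⟩ := exists_eq_ciSup_of_finite (f := x)
  have min_le : ∀ k, x i ≤ x k := fun k ↦ hi ▸ ciInf_le (finite_range x).bddBelow k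
  have le_max : ∀ k, x k ≤ x j := fun k ↦ hj ▸ le_ciSup (finite_range x).bddAbove k
  rw [← hi, ← hj, tourLength]
  simp only [Fin.forall_fin_succ, Fin.isValue, Fin.succ_zero_eq_one, Fin.succ_one_eq_two]
    at min_le le_max
  fin_cases i <;> fin_cases j <;> grind

theorem le_two_mul_sub (hx : x ∈ Icc a b) (hy : y ∈ Icc a b) (hz : z ∈ Icc a b) :
    tourLength x y z ≤ 2 * (b - a) := by
  grind [tourLength]

theorem div_two_mul_sub_sub_nonneg (hx : x ∈ Icc a b) (hy : y ∈ Icc a b) (hz : z ∈ Icc a b) :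
    0 ≤ tourLength x y z / (2 * (b - a) - tourLength x y z) :=
  div_nonneg (by unfold tourLength; positivity) (sub_nonneg.2 (le_two_mul_sub hx hy hz))

@[fun_prop]
protected theorem measurable :
    Measurable fun p : ℝ × ℝ × ℝ ↦ tourLength p.1 p.2.1 p.2.2 := by
  unfold tourLength
  fun_prop

end tourLength

theorem measurePreserving_finThreeArrow :
    MeasurePreserving fun x : Fin 3 → ℝ ↦ (x 0, x 1, x 2) :=
  ((MeasurePreserving.id volume).prod (volume_preserving_finTwoArrow ℝ)).comp
    (volume_preserving_piFinSuccAbove (fun _ ↦ ℝ) 0)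

theorem setLIntegral_Icc_tourLength {g : ℝ → ℝ≥0∞} (hg : Measurable g) (a b : ℝ) :
    ∫⁻ p in Icc a b ×ˢ Icc a b ×ˢ Icc a b, g (tourLength p.1 p.2.1 p.2.2) =
      6 * ∫⁻ r in Ioo 0 (b - a), ENNReal.ofReal (b - a - r) * (ENNReal.ofReal r * g (2 * r)) := by
  have preimage_eq : (fun x : Fin 3 → ℝ ↦ (x 0, x 1, x 2)) ⁻¹' (Icc a b ×ˢ Icc a b ×ˢ Icc a b) =
      univ.pi fun _ ↦ Icc a b := by
    ext x
    simp only [mem_preimage, mem_prod, mem_univ_pi, Fin.forall_fin_succ]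
    simp
  rw [← measurePreserving_finThreeArrow.setLIntegral_comp_preimage
    (measurableSet_Icc.prod (measurableSet_Icc.prod measurableSet_Icc)) (by fun_prop), preimage_eq]
  simp only [tourLength.eq_two_mul_iSup_sub_iInf]
  rw [setLIntegral_Icc_iSup_sub_iInf (g := fun r ↦ g (2 * r)) (by fun_prop)]
  simp

theorem setLIntegral_Icc_tourLength_div {a b : ℝ} (hab : a ≤ b) :
    ∫⁻ p in Icc a b ×ˢ Icc a b ×ˢ Icc a b, ENNReal.ofReal
      (tourLength p.1 p.2.1 p.2.2 / (2 * (b - a) - tourLength p.1 p.2.1 p.2.2)) =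
      ENNReal.ofReal (2 * (b - a) ^ 3) := by
  have integrand_eq : ∀ r ∈ Ioo 0 (b - a), ENNReal.ofReal (b - a - r) * (ENNReal.ofReal r *
      ENNReal.ofReal (2 * r / (2 * (b - a) - 2 * r))) = ENNReal.ofReal (r ^ 2) := by
    rintro r ⟨hr_pos, hr_lt⟩
    have factor_pos : 0 < b - a - r := sub_pos.2 hr_lt
    rw [← ENNReal.ofReal_mul hr_pos.le, ← ENNReal.ofReal_mul factor_pos.le, ← mul_sub]
    congr 1
    field_simp
  rw [setLIntegral_Icc_tourLength (g := fun v ↦ ENNReal.ofReal (v / (2 * (b - a) - v)))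
    (by fun_prop), setLIntegral_congr_fun measurableSet_Ioo integrand_eq,
    setLIntegral_Ioo_pow (sub_nonneg.2 hab), ← ENNReal.ofReal_ofNat,
    ← ENNReal.ofReal_mul (by norm_num)]
  congr 1
  push_cast
  ring

theorem setIntegral_Icc_tourLength_div {a b : ℝ} (hab : a ≤ b) :
    ∫ p in Icc a b ×ˢ Icc a b ×ˢ Icc a b,
      tourLength p.1 p.2.1 p.2.2 / (2 * (b - a) - tourLength p.1 p.2.1 p.2.2) =
      2 * (b - a) ^ 3 := by
  rw [integral_eq_lintegral_of_nonneg_ae, setLIntegral_Icc_tourLength_div hab,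
    ENNReal.toReal_ofReal (mul_nonneg zero_le_two (pow_nonneg (sub_nonneg.2 hab) 3))]
  · filter_upwards [ae_restrict_mem
      (measurableSet_Icc.prod (measurableSet_Icc.prod measurableSet_Icc))] with p hp
    exact tourLength.div_two_mul_sub_sub_nonneg hp.1 hp.2.1 hp.2.2
  · exact Measurable.aestronglyMeasurable (by fun_prop)

end TourLength

/-- With `s(v) = (81/2)·v/(2 − 3v)` and `h(x,y,z) = s(|x−y| + |y−z| + |z−x|)`,
`h` is nonnegative on the cube `C = [0,1/3]³` and its Lebesgue integral over `C`
equals `1`; that is, `h` is a joint probability density function on `C`. -/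
theorem stmt_1
    (s : ℝ → ℝ) (hs : ∀ v, s v = (81 / 2) * v / (2 - 3 * v))
    (h : ℝ → ℝ → ℝ → ℝ)
    (hh : ∀ x y z, h x y z = s (|x - y| + |y - z| + |z - x|)) :
    (∀ x y z, x ∈ Set.Icc (0 : ℝ) (1 / 3) → y ∈ Set.Icc (0 : ℝ) (1 / 3) →
      z ∈ Set.Icc (0 : ℝ) (1 / 3) → 0 ≤ h x y z) ∧
    ∫ p in (Set.Icc (0 : ℝ) (1 / 3) ×ˢ Set.Icc (0 : ℝ) (1 / 3) ×ˢ Set.Icc (0 : ℝ) (1 / 3)),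
      h p.1 p.2.1 p.2.2 = 1 := by
  have h_eq (x y z : ℝ) : h x y z =
      27 / 2 * (tourLength x y z / (2 * (1 / 3 - 0) - tourLength x y z)) := by
    have denom_eq : 2 - 3 * tourLength x y z = 3 * (2 * (1 / 3 - 0) - tourLength x y z) := by ring
    rw [hh, hs, ← tourLength, denom_eq, ← div_div]
    ring
  simp only [h_eq]
  constructor
  · intro x y z hx hy hz
    exact mul_nonneg (by norm_num) (tourLength.div_two_mul_sub_sub_nonneg hx hy hz)
  · rw [integral_const_mul, setIntegral_Icc_tourLength_div (by norm_num)]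
    norm_num
end

section
/- Let s(v) = (81/2)·v/(2 − 3v) and h(x,y,z) = s(|x−y| + |y−z| + |z−x|) on [0,1/3]^3. For all real x, y with 0 < y ≤ x < 1/3, the integral ∫_0^{1/3} h(x,y,z) dz equals (9/2)·( 2·ln(1 − 3(x−y)) − ln(3y·(1 − 3x)) − (1 − 6(x−y))/(1 − 3(x−y)) ). -/
open MeasureTheory

/-!
The sum of the three pairwise distances of `x, y, z` is twice their spread `max − min`, so
`h(x,y,z) = (81/2)·w/(1 − 3w)` with `w` the spread. For `y ≤ x`, as `z` runs through `[0, 1/3]` the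
spread is `x − z` up to `y`, then constantly `x − y` up to `x`, and then `z − y`. Substituting the
spread for `z` on the two outer pieces leaves two integrals of the same elementary function.
-/

theorem abs_sub_add_abs_sub_add_abs_sub_eq_two_nsmul {α : Type*} [AddCommGroup α] [LinearOrder α]
    [IsOrderedAddMonoid α] (x y z : α) :
    |x - y| + |y - z| + |z - x| = 2 • (max (max x y) z - min (min x y) z) := by
  simp only [← max_sub_min_eq_abs, two_nsmul]
  grind

theorem integral_comp_max_sub_min {E : Type*} [NormedAddCommGroup E] [NormedSpace ℝ E]
    [CompleteSpace E] {g : ℝ → E} {a b x y : ℝ} (hay : a ≤ y) (hyx : y ≤ x) (hxb : x ≤ b)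
    (hleft : IntervalIntegrable g volume (x - y) (x - a))
    (hright : IntervalIntegrable g volume (x - y) (b - y)) :
    ∫ z in a..b, g (max x z - min y z) =
      (∫ w in (x - y)..(x - a), g w) + (x - y) • g (x - y) + ∫ w in (x - y)..(b - y), g w := by
  have below : Set.EqOn (fun z => g (x - z)) (fun z => g (max x z - min y z)) (Set.uIoo a y) := by
    intro z hz
    rw [Set.uIoo_of_le hay] at hz
    simp only [max_eq_left (hz.2.le.trans hyx), min_eq_right hz.2.le]
  have between : Set.EqOn (fun _ => g (x - y)) (fun z => g (max x z - min y z))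
      (Set.uIoo y x) := by
    intro z hz
    rw [Set.uIoo_of_le hyx] at hz
    simp only [max_eq_left hz.2.le, min_eq_left hz.1.le]
  have above : Set.EqOn (fun z => g (z - y)) (fun z => g (max x z - min y z)) (Set.uIoo x b) := by
    intro z hz
    rw [Set.uIoo_of_le hxb] at hz
    simp only [max_eq_right hz.1.le, min_eq_left (hyx.trans hz.1.le)]
  have int_below : IntervalIntegrable (fun z => g (max x z - min y z)) volume a y :=
    IntervalIntegrable.congr_uIoo (by simpa using (hleft.comp_sub_left x).symm) below
  have int_between : IntervalIntegrable (fun z => g (max x z - min y z)) volume y x :=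
    intervalIntegrable_const.congr_uIoo between
  have int_above : IntervalIntegrable (fun z => g (max x z - min y z)) volume x b :=
    IntervalIntegrable.congr_uIoo (by simpa using hright.comp_sub_right y) above
  rw [← intervalIntegral.integral_add_adjacent_intervals (int_below.trans int_between) int_above,
    ← intervalIntegral.integral_add_adjacent_intervals int_below int_between,
    ← intervalIntegral.integral_congr_uIoo below, ← intervalIntegral.integral_congr_uIoo between,
    ← intervalIntegral.integral_congr_uIoo above, intervalIntegral.integral_comp_sub_left,
    intervalIntegral.integral_const, intervalIntegral.integral_comp_sub_right]

section LinearFractional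

variable {a b c d : ℝ}

theorem intervalIntegrable_id_div_sub_mul (h : ∀ w ∈ Set.uIcc a b, d - c * w ≠ 0) :
    IntervalIntegrable (fun w => w / (d - c * w)) volume a b :=
  (ContinuousOn.div (by fun_prop) (by fun_prop) h).intervalIntegrable

theorem hasDerivAt_log_sub_mul_sub_div {w : ℝ} (hc : c ≠ 0) (hw : d - c * w ≠ 0) :
    HasDerivAt (fun w => -(d * Real.log (d - c * w) / c ^ 2) - w / c) (w / (d - c * w)) w := by
  have hlin : HasDerivAt (fun w => d - c * w) (-c) w := by
    simpa using ((hasDerivAt_id w).const_mul c).const_sub d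
  refine ((((hlin.log hw).const_mul d).div_const (c ^ 2)).neg.sub
    ((hasDerivAt_id w).div_const c)).congr_deriv ?_
  field_simp
  ring

theorem integral_id_div_sub_mul (hc : c ≠ 0) (h : ∀ w ∈ Set.uIcc a b, d - c * w ≠ 0) :
    ∫ w in a..b, w / (d - c * w) =
      d * (Real.log (d - c * a) - Real.log (d - c * b)) / c ^ 2 - (b - a) / c := by
  rw [intervalIntegral.integral_eq_sub_of_hasDerivAt
    (fun w hw => hasDerivAt_log_sub_mul_sub_div hc (h w hw)) (intervalIntegrable_id_div_sub_mul h)]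
  ring

end LinearFractional

/-- With `s(v) = (81/2)·v/(2 − 3v)` and `h(x,y,z) = s(|x−y| + |y−z| + |z−x|)` on `[0,1/3]³`:
for all reals `x, y` with `0 < y ≤ x < 1/3`, the integral `∫_0^{1/3} h(x,y,z) dz`
equals `(9/2)·(2·ln(1 − 3(x−y)) − ln(3y·(1 − 3x)) − (1 − 6(x−y))/(1 − 3(x−y)))`. -/
theorem stmt_2
    (s : ℝ → ℝ) (hs : ∀ v, s v = (81 / 2) * v / (2 - 3 * v))
    (h : ℝ → ℝ → ℝ → ℝ)
    (hh : ∀ x y z, h x y z = s (|x - y| + |y - z| + |z - x|))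
    (x y : ℝ) (hy : 0 < y) (hyx : y ≤ x) (hx : x < 1 / 3) :
    ∫ z in (0 : ℝ)..(1 / 3), h x y z
      = (9 / 2) * (2 * Real.log (1 - 3 * (x - y)) - Real.log (3 * y * (1 - 3 * x))
          - (1 - 6 * (x - y)) / (1 - 3 * (x - y))) := by
  have s_two_mul (w : ℝ) : s (2 * w) = 81 / 2 * (w / (1 - 3 * w)) := by
    rw [hs, show 2 - 3 * (2 * w) = 2 * (1 - 3 * w) by ring, mul_left_comm,
      mul_div_mul_left _ _ two_ne_zero, mul_div_assoc]
  have h_eq_spread (z : ℝ) : h x y z =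
      81 / 2 * ((max x z - min y z) / (1 - 3 * (max x z - min y z))) := by
    rw [hh, abs_sub_add_abs_sub_add_abs_sub_eq_two_nsmul, max_eq_left hyx, min_eq_right hyx,
      two_nsmul, ← two_mul, s_two_mul]
  have hxy : 0 < 1 - 3 * (x - y) := by linarith
  have hleft : ∀ w ∈ Set.uIcc (x - y) (x - 0), 1 - 3 * w ≠ 0 := by grind [Set.mem_uIcc]
  have hright : ∀ w ∈ Set.uIcc (x - y) (1 / 3 - y), 1 - 3 * w ≠ 0 := by grind [Set.mem_uIcc]
  simp only [h_eq_spread, intervalIntegral.integral_const_mul]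
  rw [integral_comp_max_sub_min (g := fun w => w / (1 - 3 * w)) hy.le hyx hx.le
      (intervalIntegrable_id_div_sub_mul hleft) (intervalIntegrable_id_div_sub_mul hright),
    integral_id_div_sub_mul three_ne_zero hleft, integral_id_div_sub_mul three_ne_zero hright,
    Real.log_mul (by positivity) (by linarith), smul_eq_mul,
    show 1 - 3 * (1 / 3 - y) = 3 * y by ring, sub_zero]
  field_simp
  ring
end

section
/- Define r(u,v) = (9/2)·( 2·ln(1 − 3(u−v)) − ln(3v·(1 − 3u)) − (1 − 6(u−v))/(1 − 3(u−v)) ) for 0 < v ≤ u < 1/3. Then for every t ∈ [1/3, 2/3], the double integral ∫_{t−1/3}^{1/3} ∫_0^{u−t+1/3} r(u,v) dv du equals 1 − (3/2)·t. -/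
open MeasureTheory

/-!
In the coordinates `x = 1 - 3u`, `y = 3v` the density becomes, up to the factor `9/2`,
`2 log (x + y) - log x - log y - 2 + 1/(x + y)`, and the domain of integration becomes the triangle
`x, y > 0`, `x + y < c` with `c = 2 - 3t`. All integrals over this triangle reduce to those of
`log`, `x⁻¹` and `x log x`. The logarithmic and quadratic terms in `c` cancel and only the integral
`c` of `1/(x + y)` survives, so the result is `(1/9) · (9/2) · c = 1 - (3/2) t`.
-/

open Real intervalIntegral

theorem integral_mul_log (a b : ℝ) :
    ∫ x in a..b, x * log x = b ^ 2 * log b / 2 - a ^ 2 * log a / 2 - b ^ 2 / 4 + a ^ 2 / 4 := by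
  have hderiv (x : ℝ) (hx : x ≠ 0) :
      HasDerivAt (fun x ↦ x * (x * log x) / 2 - x ^ 2 / 4) (x * log x) x := by
    refine ((((hasDerivAt_id x).mul (hasDerivAt_mul_log hx)).div_const 2).sub
      ((hasDerivAt_pow 2 x).div_const 4)).congr_deriv ?_
    simp only [id_eq]
    ring
  rw [integral_eq_of_hasDerivAt_off_countable _ _ (Set.countable_singleton 0)
    (by fun_prop) (fun x hx ↦ hderiv x hx.2) (continuous_mul_log.intervalIntegrable a b)]
  ring

theorem integral_integral_comp_sub_mul_comp_mul {E : Type*} [NormedAddCommGroup E]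
    [NormedSpace ℝ E] (g : ℝ → ℝ → E) {k : ℝ} (hk : k ≠ 0) (c d : ℝ) :
    ∫ u in ((d - c) / k)..(d / k), ∫ v in (0 : ℝ)..((c - (d - k * u)) / k), g (d - k * u) (k * v)
      = (k ^ 2)⁻¹ • ∫ x in (0 : ℝ)..c, ∫ y in (0 : ℝ)..(c - x), g x y := by
  have inner (x : ℝ) :
      ∫ v in (0 : ℝ)..((c - x) / k), g x (k * v) = k⁻¹ • ∫ y in (0 : ℝ)..(c - x), g x y := by
    rw [integral_comp_mul_left _ hk, mul_zero, mul_div_cancel₀ _ hk]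
  simp only [inner, intervalIntegral.integral_smul]
  rw [integral_comp_sub_mul (fun x ↦ ∫ y in (0 : ℝ)..(c - x), g x y) hk, mul_div_cancel₀ _ hk,
    mul_div_cancel₀ _ hk, sub_self, sub_sub_cancel, smul_smul, ← mul_inv, ← sq]

/-- The density `r` in the coordinates `x = 1 - 3u`, `y = 3v`, divided by `9/2`. -/
noncomputable def rescaledDensity (x y : ℝ) : ℝ :=
  2 * log (x + y) - 2 + (x + y)⁻¹ - log x - log y

theorem rescaledDensity_one_sub_mul {u v : ℝ} (hu : u < 1 / 3) (hv : 0 < v) :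
    rescaledDensity (1 - 3 * u) (3 * v) =
      2 * log (1 - 3 * (u - v)) - log (3 * v * (1 - 3 * u))
        - (1 - 6 * (u - v)) / (1 - 3 * (u - v)) := by
  have hx : 0 < 1 - 3 * u := by linarith
  have hz : 1 - 3 * (u - v) ≠ 0 := by linarith
  have hfrac : (1 - 6 * (u - v)) / (1 - 3 * (u - v)) = 2 - (1 - 3 * (u - v))⁻¹ := by
    rw [eq_sub_iff_add_eq, inv_eq_one_div, ← add_div, div_eq_iff hz]
    ring
  rw [rescaledDensity, hfrac, log_mul (by positivity) hx.ne',
    show 1 - 3 * u + 3 * v = 1 - 3 * (u - v) by ring]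
  ring

theorem integral_rescaledDensity {x c : ℝ} (hx : 0 < x) (hc : 0 < c) :
    ∫ y in (0 : ℝ)..(c - x), rescaledDensity x y =
      2 * c * log c + log c - 2 * (x * log x) - (1 + c - x) * log x
        - (c - x) * log (c - x) - 3 * (c - x) := by
  have h0 : (0 : ℝ) ∉ Set.uIcc x c := Set.notMem_uIcc_of_lt hx hc
  have hlog : IntervalIntegrable (fun z ↦ 2 * log z - 2) volume x c :=
    (intervalIntegrable_log'.const_mul 2).sub intervalIntegrable_const
  have hinv : IntervalIntegrable (fun z : ℝ ↦ z⁻¹) volume x c :=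
    intervalIntegrable_inv_iff.2 (.inr h0)
  have hsum : IntervalIntegrable (fun y ↦ 2 * log (x + y) - 2 + (x + y)⁻¹) volume 0 (c - x) := by
    simpa using (hlog.add hinv).comp_add_left x
  calc ∫ y in (0 : ℝ)..(c - x), rescaledDensity x y
      = (∫ y in (0 : ℝ)..(c - x), (2 * log (x + y) - 2 + (x + y)⁻¹))
          - (c - x) * log x - ∫ y in (0 : ℝ)..(c - x), log y := by
        simp only [rescaledDensity]
        rw [intervalIntegral.integral_sub (hsum.sub intervalIntegrable_const)
          intervalIntegrable_log', intervalIntegral.integral_sub hsum intervalIntegrable_const,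
          intervalIntegral.integral_const, smul_eq_mul, sub_zero]
    _ = (∫ z in x..c, (2 * log z - 2 + z⁻¹)) - (c - x) * log x
          - ∫ y in (0 : ℝ)..(c - x), log y := by
        rw [integral_comp_add_left (fun z ↦ 2 * log z - 2 + z⁻¹), add_zero, add_sub_cancel]
    _ = 2 * (∫ z in x..c, log z) - 2 * (c - x) + (log c - log x) - (c - x) * log x
          - ∫ y in (0 : ℝ)..(c - x), log y := by
        rw [intervalIntegral.integral_add hlog hinv, intervalIntegral.integral_sub
          (intervalIntegrable_log'.const_mul 2) intervalIntegrable_const,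
          intervalIntegral.integral_const_mul, intervalIntegral.integral_const, smul_eq_mul,
          integral_inv h0, log_div hc.ne' hx.ne', mul_comm (c - x) 2]
    _ = _ := by
        rw [integral_log, integral_log]
        ring

theorem integral_integral_rescaledDensity {c : ℝ} (hc : 0 ≤ c) :
    ∫ x in (0 : ℝ)..c, ∫ y in (0 : ℝ)..(c - x), rescaledDensity x y = c := by
  have hlog : IntervalIntegrable log volume 0 c := intervalIntegrable_log'
  have hmulLog : IntervalIntegrable (fun x ↦ x * log x) volume 0 c :=
    continuous_mul_log.intervalIntegrable 0 c
  have hreflect : ∫ x in (0 : ℝ)..c, (c - x) * log (c - x) = ∫ x in (0 : ℝ)..c, x * log x := by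
    rw [integral_comp_sub_left (fun x ↦ x * log x), sub_self, sub_zero]
  have hreflected : IntervalIntegrable (fun x ↦ (c - x) * log (c - x)) volume 0 c :=
    Continuous.intervalIntegrable (by fun_prop) 0 c
  have haffine : IntervalIntegrable
      (fun x ↦ 2 * c * log c + log c - 3 * c + 3 * x) volume 0 c :=
    Continuous.intervalIntegrable (by fun_prop) 0 c
  have hintegral_affine : ∫ x in (0 : ℝ)..c, (2 * c * log c + log c - 3 * c + 3 * x) =
      (2 * c * log c + log c - 3 * c) * c + 3 * (c ^ 2 / 2) := by
    rw [integral_comp_add_mul (fun x ↦ x) three_ne_zero, integral_id, smul_eq_mul]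
    ring
  calc ∫ x in (0 : ℝ)..c, ∫ y in (0 : ℝ)..(c - x), rescaledDensity x y
      = ∫ x in (0 : ℝ)..c, ((2 * c * log c + log c - 3 * c + 3 * x)
          - (1 + c) * log x - x * log x - (c - x) * log (c - x)) := by
        refine integral_congr_Ioo_of_le hc fun x hx ↦ ?_
        rw [integral_rescaledDensity hx.1 (hx.1.trans hx.2)]
        ring
    _ = (2 * c * log c + log c - 3 * c) * c + 3 * (c ^ 2 / 2)
          - (1 + c) * (∫ x in (0 : ℝ)..c, log x) - 2 * ∫ x in (0 : ℝ)..c, x * log x := by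
        rw [intervalIntegral.integral_sub ((haffine.sub (hlog.const_mul _)).sub hmulLog) hreflected,
          intervalIntegral.integral_sub (haffine.sub (hlog.const_mul _)) hmulLog,
          intervalIntegral.integral_sub haffine (hlog.const_mul _),
          intervalIntegral.integral_const_mul, hintegral_affine, hreflect]
        ring
    _ = c := by
        rw [integral_log, integral_mul_log]
        ring

/-- Define `r(u,v) = (9/2)·(2·ln(1 − 3(u−v)) − ln(3v·(1 − 3u)) − (1 − 6(u−v))/(1 − 3(u−v)))`.
Then for every `t ∈ [1/3, 2/3]`,
`∫_{t−1/3}^{1/3} ∫_0^{u−t+1/3} r(u,v) dv du = 1 − (3/2)·t`. -/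
theorem stmt_3
    (r : ℝ → ℝ → ℝ)
    (hr : ∀ u v, 0 < v → v ≤ u → u < 1 / 3 →
      r u v = (9 / 2) * (2 * Real.log (1 - 3 * (u - v)) - Real.log (3 * v * (1 - 3 * u))
          - (1 - 6 * (u - v)) / (1 - 3 * (u - v))))
    (t : ℝ) (ht : t ∈ Set.Icc (1 / 3 : ℝ) (2 / 3)) :
    ∫ u in (t - 1 / 3)..(1 / 3), ∫ v in (0 : ℝ)..(u - t + 1 / 3), r u v
      = 1 - (3 / 2) * t := by
  obtain ⟨ht₁, ht₂⟩ := ht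
  calc ∫ u in (t - 1 / 3)..(1 / 3), ∫ v in (0 : ℝ)..(u - t + 1 / 3), r u v
      = ∫ u in (t - 1 / 3)..(1 / 3), ∫ v in (0 : ℝ)..(u - t + 1 / 3),
          (9 / 2) * rescaledDensity (1 - 3 * u) (3 * v) := by
        refine integral_congr_Ioo_of_le (by linarith) fun u ⟨hu₁, hu₂⟩ ↦
          integral_congr_Ioo_of_le (by linarith) fun v ⟨hv₁, hv₂⟩ ↦ ?_
        rw [hr u v hv₁ (by linarith) hu₂, rescaledDensity_one_sub_mul hu₂ hv₁]
    _ = (9 / 2) * ∫ u in ((1 - (2 - 3 * t)) / 3)..(1 / 3),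
          ∫ v in (0 : ℝ)..((2 - 3 * t - (1 - 3 * u)) / 3), rescaledDensity (1 - 3 * u) (3 * v) := by
        have hupper (u : ℝ) : u - t + 1 / 3 = (2 - 3 * t - (1 - 3 * u)) / 3 := by ring
        simp only [intervalIntegral.integral_const_mul, hupper,
          show t - 1 / 3 = (1 - (2 - 3 * t)) / 3 by ring]
    _ = (9 / 2) * ((3 ^ 2)⁻¹ * (2 - 3 * t)) := by
        rw [integral_integral_comp_sub_mul_comp_mul _ three_ne_zero,
          integral_integral_rescaledDensity (by linarith), smul_eq_mul]
    _ = 1 - (3 / 2) * t := by ring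
end

section
/- Let μ be the probability measure on ℝ³ whose density with respect to Lebesgue measure is h(x,y,z) = (81/2)·w/(2 − 3w) with w = |x−y| + |y−z| + |z−x| on the cube [0,1/3]^3, and 0 outside the cube. Then the pushforward of μ under the map (x,y,z) ↦ x − y + 1/3 is the uniform probability distribution on the interval [0, 2/3]. -/
open MeasureTheory
open scoped ENNReal

/-!
In the coordinates `t = x - y`, `s = x - z` the spread `w = |x - y| + |y - z| + |z - x|` depends
on `(t, s)` alone, and the points of the cube `[0, a]³` over a given `(t, s)` form a segment of
length `a - w / 2`. The density `w / (2a³(2a - w))` is chosen so that its product with this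
length is `w / (4a³)` on the region `w < 2a`, without the denominator. For `|t| < a` this region
is an interval of values of `s`, over which `w` integrates to `2a²` whatever `t` is; hence
`x - y` is uniform on `[-a, a]`.
-/

lemma lintegral_prod_eq_lintegral_lintegral_sub {α G : Type*} [MeasurableSpace α]
    [MeasurableSpace G] [AddGroup G] [MeasurableSub₂ G] [MeasurableAdd G] [MeasurableNeg G]
    (μ : Measure α) [SFinite μ] (ν : Measure G) [SFinite ν] [ν.IsAddLeftInvariant]
    [ν.IsNegInvariant] {c : α → G} (hc : Measurable c) {F : α × G → ℝ≥0∞} (hF : Measurable F) :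
    ∫⁻ p, F p ∂(μ.prod ν) = ∫⁻ q, ∫⁻ x, F (x, c x - q) ∂μ ∂ν :=
  calc ∫⁻ p, F p ∂(μ.prod ν)
      = ∫⁻ x, ∫⁻ y, F (x, y) ∂ν ∂μ := lintegral_prod _ hF.aemeasurable
    _ = ∫⁻ x, ∫⁻ q, F (x, c x - q) ∂ν ∂μ :=
        lintegral_congr fun x ↦ (lintegral_sub_left_eq_self (fun y ↦ F (x, y)) (c x)).symm
    _ = ∫⁻ q, ∫⁻ x, F (x, c x - q) ∂μ ∂ν :=
        lintegral_lintegral_swap (by unfold Function.uncurry; fun_prop)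

lemma isUniform_add_const {Ω G : Type*} [MeasurableSpace Ω] [MeasurableSpace G] [AddGroup G]
    [MeasurableAdd G] {ν : Measure G} [ν.IsAddRightInvariant] {P : Measure Ω} {X : Ω → G}
    {s : Set G} (hX : AEMeasurable X P) (hs : MeasurableSet s) (c : G)
    (h : pdf.IsUniform X ((· + c) ⁻¹' s) P ν) : pdf.IsUniform (fun ω ↦ X ω + c) s P ν := by
  have shift := measurePreserving_add_right ν c
  unfold pdf.IsUniform at h ⊢
  rw [← Function.comp_def (· + c) X,
    ← AEMeasurable.map_map_of_aemeasurable shift.measurable.aemeasurable hX, h,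
    ProbabilityTheory.cond, ProbabilityTheory.cond, Measure.map_smul,
    (shift.restrict_preimage hs).map_eq, shift.measure_preimage hs.nullMeasurableSet]

lemma integral_abs_sub {b c t : ℝ} (hbt : b ≤ t) (htc : t ≤ c) :
    ∫ s in b..c, |s - t| = ((t - b) ^ 2 + (c - t) ^ 2) / 2 := by
  have integrable (u v : ℝ) : IntervalIntegrable (fun s ↦ |s - t|) volume u v :=
    Continuous.intervalIntegrable (by fun_prop) u v
  have left : ∫ s in b..t, |s - t| = ∫ s in b..t, (t - s) :=
    intervalIntegral.integral_congr fun s hs ↦ by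
      rw [Set.uIcc_of_le hbt] at hs
      exact abs_sub_comm s t ▸ abs_of_nonneg (sub_nonneg.2 hs.2)
  have right : ∫ s in t..c, |s - t| = ∫ s in t..c, (s - t) :=
    intervalIntegral.integral_congr fun s hs ↦ by
      rw [Set.uIcc_of_le htc] at hs
      exact abs_of_nonneg (sub_nonneg.2 hs.1)
  rw [← intervalIntegral.integral_add_adjacent_intervals (integrable b t) (integrable t c),
    left, right, intervalIntegral.integral_comp_sub_left (fun s ↦ s),
    intervalIntegral.integral_comp_sub_right (fun s ↦ s), integral_id, integral_id]
  ring

/-- The sum of the pairwise distances of three real numbers, the `w` of the informal statement. -/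
def spread (p : ℝ × ℝ × ℝ) : ℝ :=
  |p.1 - p.2.1| + |p.2.1 - p.2.2| + |p.2.2 - p.1|

@[fun_prop]
lemma continuous_spread : Continuous spread := by
  unfold spread
  fun_prop

lemma spread_nonneg (p : ℝ × ℝ × ℝ) : 0 ≤ spread p := by
  unfold spread
  positivity

lemma spread_eq_spread_zero_sub (p : ℝ × ℝ × ℝ) :
    spread p = spread (0, p.1 - p.2.1, p.1 - p.2.2) := by
  grind [spread]

lemma spread_eq_two_mul_max_sub_min (p : ℝ × ℝ × ℝ) :
    spread p = 2 * (max p.1 (max p.2.1 p.2.2) - min p.1 (min p.2.1 p.2.2)) := by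
  grind [spread]

lemma two_mul_abs_le_spread (t s : ℝ) : 2 * |t| ≤ spread (0, t, s) := by
  have triangle : |t| ≤ |t - s| + |s| := by simpa using abs_sub_le t s 0
  simp only [spread, zero_sub, sub_zero, abs_neg]
  linarith

lemma spread_zero_lt_two_mul_iff {a t : ℝ} (ht : |t| < a) (s : ℝ) :
    spread (0, t, s) < 2 * a ↔ s ∈ Set.Ioo (max t 0 - a) (min t 0 + a) := by
  rw [spread_eq_two_mul_max_sub_min]
  grind

lemma integral_spread_zero {a t : ℝ} (ht : |t| ≤ a) :
    ∫ s in (max t 0 - a)..(min t 0 + a), spread (0, t, s) = 2 * a ^ 2 := by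
  have spread_eq (s : ℝ) : spread (0, t, s) = |t| + |s - t| + |s - 0| := by
    simp only [spread, zero_sub, abs_neg, abs_sub_comm t s]
  have integrable (u b c : ℝ) : IntervalIntegrable (fun s ↦ |s - u|) volume b c :=
    Continuous.intervalIntegrable (by fun_prop) b c
  simp only [spread_eq]
  rw [intervalIntegral.integral_add (intervalIntegrable_const.add (integrable t _ _))
      (integrable 0 _ _),
    intervalIntegral.integral_add intervalIntegrable_const (integrable t _ _),
    intervalIntegral.integral_const, integral_abs_sub (by grind) (by grind),
    integral_abs_sub (by grind) (by grind), smul_eq_mul]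
  rcases le_total 0 t with h | h
  · rw [max_eq_left h, min_eq_right h, abs_of_nonneg h]
    ring
  · rw [max_eq_right h, min_eq_left h, abs_of_nonpos h]
    ring

lemma setLIntegral_spread_zero (a t : ℝ) :
    ∫⁻ s in {s | spread (0, t, s) < 2 * a}, ENNReal.ofReal (spread (0, t, s)) =
      (Set.Ioo (-a) a).indicator (fun _ ↦ ENNReal.ofReal (2 * a ^ 2)) t := by
  by_cases ht : |t| < a
  · have slice : {s | spread (0, t, s) < 2 * a} = Set.Ioo (max t 0 - a) (min t 0 + a) :=
      Set.ext (spread_zero_lt_two_mul_iff ht)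
    have integrable : IntervalIntegrable (fun s ↦ spread (0, t, s)) volume
        (max t 0 - a) (min t 0 + a) := Continuous.intervalIntegrable (by fun_prop) _ _
    rw [Set.indicator_of_mem (Set.mem_Ioo.2 (abs_lt.1 ht)), slice, restrict_Ioo_eq_restrict_Ioc,
      ← ofReal_integral_eq_lintegral_ofReal integrable.1 (.of_forall fun s ↦ spread_nonneg _),
      ← intervalIntegral.integral_of_le (by grind), integral_spread_zero ht.le]
  · have slice : {s | spread (0, t, s) < 2 * a} = ∅ :=
      Set.eq_empty_of_forall_notMem fun s (hs : spread (0, t, s) < 2 * a) ↦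
        ht (by linarith [two_mul_abs_le_spread t s])
    have notMem : t ∉ Set.Ioo (-a) a := fun h ↦ ht (abs_lt.2 h)
    rw [Set.indicator_of_notMem notMem, slice, setLIntegral_empty]

/-- The cube `[0, a]³` supporting the joint density of `(x, y, z)`. -/
def sideCube (a : ℝ) : Set (ℝ × ℝ × ℝ) :=
  Set.Icc 0 a ×ˢ Set.Icc 0 a ×ˢ Set.Icc 0 a

lemma measurableSet_sideCube (a : ℝ) : MeasurableSet (sideCube a) :=
  measurableSet_Icc.prod (measurableSet_Icc.prod measurableSet_Icc)

lemma volume_fiber_sideCube (a : ℝ) (q : ℝ × ℝ) :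
    volume {x | (x, (x, x) - q) ∈ sideCube a} = ENNReal.ofReal (a - spread (0, q) / 2) := by
  have fiber_eq : {x | (x, (x, x) - q) ∈ sideCube a} =
      Set.Icc 0 a ∩ ((· - q.1) ⁻¹' Set.Icc 0 a ∩ (· - q.2) ⁻¹' Set.Icc 0 a) := rfl
  rw [fiber_eq, Set.preimage_sub_const_Icc, Set.preimage_sub_const_Icc, Set.Icc_inter_Icc,
    Set.Icc_inter_Icc, Real.volume_Icc, spread_eq_two_mul_max_sub_min]
  congr 1
  grind

lemma setLIntegral_sideCube_sub (a : ℝ) {G : ℝ × ℝ → ℝ≥0∞} (hG : Measurable G) :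
    ∫⁻ p in sideCube a, G (p.1 - p.2.1, p.1 - p.2.2) =
      ∫⁻ q, ENNReal.ofReal (a - spread (0, q) / 2) * G q := by
  rw [← lintegral_indicator (measurableSet_sideCube a), Measure.volume_eq_prod,
    lintegral_prod_eq_lintegral_lintegral_sub volume volume (c := fun x ↦ (x, x)) (by fun_prop)
      (Measurable.indicator (by fun_prop) (measurableSet_sideCube a))]
  refine lintegral_congr fun q ↦ ?_
  have measurableSet_fiber : MeasurableSet {x | (x, (x, x) - q) ∈ sideCube a} :=
    measurableSet_preimage (by fun_prop) (measurableSet_sideCube a)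
  rw [← volume_fiber_sideCube, mul_comm, ← lintegral_indicator_const measurableSet_fiber]
  exact lintegral_congr fun x ↦ by simp [Set.indicator]

/-- The joint density of `(x, y, z)` on the cube of side `a`, as a function of the spread `w`. The
factor `2 * a ^ 3` normalizes the total mass; at `w = 2 * a` the value is the junk value `0`. -/
noncomputable def spreadDensity (a w : ℝ) : ℝ :=
  w / (2 * a ^ 3 * (2 * a - w))

@[fun_prop]
lemma measurable_spreadDensity (a : ℝ) : Measurable (spreadDensity a) := by
  unfold spreadDensity
  fun_prop

lemma ofReal_mul_spreadDensity {a : ℝ} (ha : 0 < a) (w : ℝ) :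
    ENNReal.ofReal (a - w / 2) * ENNReal.ofReal (spreadDensity a w) =
      (Set.Iio (2 * a)).indicator
        (fun w ↦ ENNReal.ofReal (1 / (4 * a ^ 3)) * ENNReal.ofReal w) w := by
  rcases lt_or_ge w (2 * a) with h | h
  · rw [Set.indicator_of_mem (Set.mem_Iio.2 h), ← ENNReal.ofReal_mul (by linarith),
      ← ENNReal.ofReal_mul (by positivity)]
    congr 1
    have gap_eq : a - w / 2 = (2 * a - w) / 2 := by ring
    have gap_ne_zero : 2 * a - w ≠ 0 := by linarith
    rw [spreadDensity, gap_eq]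
    field_simp
    ring
  · rw [Set.indicator_of_notMem (Set.notMem_Iio.2 h), ENNReal.ofReal_of_nonpos (by linarith),
      zero_mul]

lemma lintegral_ofReal_mul_spreadDensity {a : ℝ} (ha : 0 < a) (t : ℝ) :
    ∫⁻ s, ENNReal.ofReal (a - spread (0, t, s) / 2) *
        ENNReal.ofReal (spreadDensity a (spread (0, t, s))) =
      (Set.Ioo (-a) a).indicator (fun _ ↦ ENNReal.ofReal (2 * a)⁻¹) t := by
  have measurableSet_slice : MeasurableSet {s | spread (0, t, s) < 2 * a} :=
    measurableSet_lt (by fun_prop) measurable_const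
  have factor_eq : 1 / (4 * a ^ 3) * (2 * a ^ 2) = (2 * a)⁻¹ := by
    field_simp
    norm_num
  calc ∫⁻ s, ENNReal.ofReal (a - spread (0, t, s) / 2) *
        ENNReal.ofReal (spreadDensity a (spread (0, t, s)))
      = ∫⁻ s in {s | spread (0, t, s) < 2 * a},
          ENNReal.ofReal (1 / (4 * a ^ 3)) * ENNReal.ofReal (spread (0, t, s)) := by
        rw [← lintegral_indicator measurableSet_slice]
        exact lintegral_congr fun s ↦ ofReal_mul_spreadDensity ha _
    _ = ENNReal.ofReal (1 / (4 * a ^ 3)) *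
          (Set.Ioo (-a) a).indicator (fun _ ↦ ENNReal.ofReal (2 * a ^ 2)) t := by
        rw [lintegral_const_mul _ (by fun_prop), setLIntegral_spread_zero]
    _ = (Set.Ioo (-a) a).indicator (fun _ ↦ ENNReal.ofReal (2 * a)⁻¹) t := by
        rw [← Set.indicator_const_mul, ← ENNReal.ofReal_mul (by positivity), factor_eq]

/-- The joint law of `(x, y, z)` on the cube of side `a`; the informal statement has `a = 1 / 3`. -/
noncomputable def spreadMeasure (a : ℝ) : Measure (ℝ × ℝ × ℝ) :=
  (volume.restrict (sideCube a)).withDensity fun p ↦ ENNReal.ofReal (spreadDensity a (spread p))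

lemma lintegral_sub_spreadMeasure {a : ℝ} (ha : 0 < a) {g : ℝ → ℝ≥0∞} (hg : Measurable g) :
    ∫⁻ p, g (p.1 - p.2.1) ∂spreadMeasure a =
      ENNReal.ofReal (2 * a)⁻¹ * ∫⁻ t in Set.Icc (-a) a, g t := by
  let G (q : ℝ × ℝ) : ℝ≥0∞ := ENNReal.ofReal (spreadDensity a (spread (0, q))) * g q.1
  have hG : Measurable G := by fun_prop
  calc ∫⁻ p, g (p.1 - p.2.1) ∂spreadMeasure a
      = ∫⁻ p in sideCube a, G (p.1 - p.2.1, p.1 - p.2.2) := by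
        rw [spreadMeasure, lintegral_withDensity_eq_lintegral_mul _ (by fun_prop) (by fun_prop)]
        simp only [G, ← spread_eq_spread_zero_sub, Pi.mul_apply]
    _ = ∫⁻ t, ∫⁻ s, ENNReal.ofReal (a - spread (0, t, s) / 2) * G (t, s) := by
        rw [setLIntegral_sideCube_sub a hG, Measure.volume_eq_prod,
          lintegral_prod _ (by fun_prop)]
    _ = ∫⁻ t, (Set.Ioo (-a) a).indicator (fun t ↦ ENNReal.ofReal (2 * a)⁻¹ * g t) t := by
        refine lintegral_congr fun t ↦ ?_
        simp only [G, ← mul_assoc]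
        rw [lintegral_mul_const _ (by fun_prop), lintegral_ofReal_mul_spreadDensity ha,
          Set.indicator_mul_left]
    _ = ENNReal.ofReal (2 * a)⁻¹ * ∫⁻ t in Set.Icc (-a) a, g t := by
        rw [lintegral_indicator measurableSet_Ioo, restrict_Ioo_eq_restrict_Icc,
          lintegral_const_mul _ hg]

theorem isUniform_sub_spreadMeasure {a : ℝ} (ha : 0 < a) :
    pdf.IsUniform (fun p ↦ p.1 - p.2.1) (Set.Icc (-a) a) (spreadMeasure a) := by
  refine Measure.ext_of_lintegral _ fun g hg ↦ ?_
  have volume_Icc : volume (Set.Icc (-a) a) = ENNReal.ofReal (2 * a) := by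
    rw [Real.volume_Icc, sub_neg_eq_add, two_mul]
  rw [lintegral_map hg (by fun_prop), lintegral_sub_spreadMeasure ha hg, ProbabilityTheory.cond,
    lintegral_smul_measure, volume_Icc, ENNReal.ofReal_inv_of_pos (by positivity), smul_eq_mul]

theorem isUniform_sub_add_spreadMeasure {a : ℝ} (ha : 0 < a) :
    pdf.IsUniform (fun p ↦ p.1 - p.2.1 + a) (Set.Icc 0 (2 * a)) (spreadMeasure a) := by
  refine isUniform_add_const (by fun_prop) measurableSet_Icc a ?_
  rw [Set.preimage_add_const_Icc, zero_sub, two_mul, add_sub_cancel_right]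
  exact isUniform_sub_spreadMeasure ha

lemma spreadDensity_one_third (w : ℝ) :
    spreadDensity (1 / 3) w = 81 / 2 * w / (2 - 3 * w) := by
  rw [spreadDensity, ← mul_div_mul_left w _ (show (81 / 2 : ℝ) ≠ 0 by norm_num)]
  congr 1
  ring

/-- Let `μ` be the probability measure on `ℝ³` with density
`h(x,y,z) = (81/2)·w/(2 − 3w)`, `w = |x−y| + |y−z| + |z−x|`, on the cube `[0,1/3]³`
(and `0` outside). Then the pushforward of `μ` under `(x,y,z) ↦ x − y + 1/3` is the
uniform probability distribution on `[0, 2/3]`. -/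
theorem stmt_4
    (h : ℝ × ℝ × ℝ → ℝ)
    (hh : ∀ p : ℝ × ℝ × ℝ, h p =
      (81 / 2) * (|p.1 - p.2.1| + |p.2.1 - p.2.2| + |p.2.2 - p.1|) /
        (2 - 3 * (|p.1 - p.2.1| + |p.2.1 - p.2.2| + |p.2.2 - p.1|)))
    (C : Set (ℝ × ℝ × ℝ))
    (hC : C = Set.Icc (0 : ℝ) (1 / 3) ×ˢ Set.Icc (0 : ℝ) (1 / 3) ×ˢ Set.Icc (0 : ℝ) (1 / 3))
    (μ : Measure (ℝ × ℝ × ℝ))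
    (hμ : μ = volume.withDensity (fun p => ENNReal.ofReal (C.indicator h p))) :
    IsProbabilityMeasure μ ∧
    Measure.map (fun p : ℝ × ℝ × ℝ => p.1 - p.2.1 + 1 / 3) μ
      = (3 / 2 : ℝ≥0∞) • volume.restrict (Set.Icc (0 : ℝ) (2 / 3)) := by
  have μ_eq : μ = spreadMeasure (1 / 3) := by
    have h_eq : h = fun p ↦ spreadDensity (1 / 3) (spread p) :=
      funext fun p ↦ (hh p).trans (spreadDensity_one_third (spread p)).symm
    rw [hμ, hC, h_eq, spreadMeasure, ← withDensity_indicator (measurableSet_sideCube _)]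
    exact congrArg _ (Set.indicator_comp_of_zero ENNReal.ofReal_zero).symm
  have volume_Icc : volume (Set.Icc (0 : ℝ) (2 / 3)) = ENNReal.ofReal (2 / 3) := by
    rw [Real.volume_Icc, sub_zero]
  have uniform : pdf.IsUniform (fun p : ℝ × ℝ × ℝ ↦ p.1 - p.2.1 + 1 / 3)
      (Set.Icc (0 : ℝ) (2 / 3)) μ := by
    rw [μ_eq, show (2 / 3 : ℝ) = 2 * (1 / 3) by norm_num]
    exact isUniform_sub_add_spreadMeasure (by norm_num)
  refine ⟨uniform.isProbabilityMeasure (by simp [volume_Icc]) (by simp [volume_Icc]), ?_⟩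
  rw [uniform, ProbabilityTheory.cond, volume_Icc, ENNReal.ofReal_div_of_pos (by norm_num),
    ENNReal.inv_div (by simp) (by simp), ENNReal.ofReal_ofNat, ENNReal.ofReal_ofNat]
end

section
/- For every integer n ≥ 2 there exists a probability measure μ on ℝⁿ such that μ-almost surely the coordinates b_1, …, b_n satisfy b_i ∈ [0, 2/n] for all i and b_1 + ⋯ + b_n = 1, and for each i the pushforward of μ under the i-th coordinate projection is the uniform probability distribution on [0, 2/n]. -/
open MeasureTheory
open scoped ENNReal

/-!
Take `m = n - 1` and let `x` be uniform on `[0, 1]`. The `m` rotations `Int.fract (x + k / m)`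
are again uniform, and so is `Int.fract (m * x)`. Hermite's identity
`∑ k < m, Int.fract (x + k / m) = Int.fract (m * x) + (m - 1) / 2` says that, together with the
reflection `1 - Int.fract (m * x)`, they form `n` uniform variables whose sum is always `n / 2`.
Rescaling by `2 / n` gives the bids.
-/

section HermiteIdentity

theorem sum_range_natCast_div {K : Type*} [Field K] [CharZero K] {m : ℕ} (hm : m ≠ 0) :
    ∑ k ∈ Finset.range m, (k : K) / m = (m - 1) / 2 := by
  have hm' : (m : K) ≠ 0 := Nat.cast_ne_zero.2 hm
  have hgauss : (∑ k ∈ Finset.range m, (k : K)) * 2 = m * (m - 1) := by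
    have h := congrArg (Nat.cast : ℕ → K) (Finset.sum_range_id_mul_two m)
    rwa [Nat.cast_mul, Nat.cast_mul, Nat.cast_sum, Nat.cast_pred (Nat.pos_of_ne_zero hm)] at h
  rw [← Finset.sum_div, div_eq_div_iff hm' two_ne_zero, hgauss, mul_comm]

variable {K : Type*} [Field K] [LinearOrder K] [IsStrictOrderedRing K] [FloorRing K] {m : ℕ}

theorem periodic_sum_range_fract_add_div (hm : m ≠ 0) :
    Function.Periodic (fun x : K => ∑ k ∈ Finset.range m, Int.fract (x + k / m)) (1 / m) := by
  intro x
  have hm' : (m : K) ≠ 0 := Nat.cast_ne_zero.2 hm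
  have hshift (k : ℕ) : x + 1 / m + (k : K) / m = x + (k + 1 : ℕ) / m := by push_cast; ring
  have hwrap : Int.fract (x + (m : K) / m) = Int.fract (x + (0 : ℕ) / m) := by
    simp [div_self hm']
  simp only [hshift]
  rw [← add_left_inj (Int.fract (x + (0 : ℕ) / m)),
    ← Finset.sum_range_succ' (fun k : ℕ => Int.fract (x + (k : K) / m)), Finset.sum_range_succ,
    hwrap]

theorem periodic_fract_natCast_mul (hm : m ≠ 0) :
    Function.Periodic (fun x : K => Int.fract (m * x)) (1 / m) := fun x => by
  simp only [mul_add, mul_one_div_cancel (Nat.cast_ne_zero.2 hm : (m : K) ≠ 0),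
    Int.fract_add_one]

theorem sum_range_fract_add_div (hm : m ≠ 0) (x : K) :
    ∑ k ∈ Finset.range m, Int.fract (x + k / m) = Int.fract (m * x) + (m - 1) / 2 := by
  have hm' : (0 : K) < m := Nat.cast_pos.2 (Nat.pos_of_ne_zero hm)
  -- The difference of the two fractional-part terms is `1 / m`-periodic, so `x` may be moved to
  -- `[0, 1 / m)`, where every fractional part is its argument.
  obtain ⟨y, ⟨hy0, hy⟩, hxy⟩ := ((periodic_sum_range_fract_add_div (K := K) hm).sub
    (periodic_fract_natCast_mul hm)).exists_mem_Ico₀ (one_div_pos.2 hm') x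
  have hmy : (m : K) * y < 1 := by rwa [lt_div_iff₀' hm'] at hy
  have hrotation : ∀ k ∈ Finset.range m, Int.fract (y + (k : K) / m) = y + k / m := by
    intro k hk
    have hk' : (k : K) + 1 ≤ m := by exact_mod_cast Finset.mem_range.1 hk
    refine Int.fract_eq_self.2 ⟨by positivity, ?_⟩
    calc y + (k : K) / m < 1 / m + k / m := by gcongr
      _ = (k + 1) / m := by ring
      _ ≤ 1 := (div_le_one hm').2 hk'
  have hfract : Int.fract ((m : K) * y) = m * y := Int.fract_eq_self.2 ⟨by positivity, hmy⟩
  rw [← sub_eq_iff_eq_add']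
  refine hxy.trans ?_
  simp only [Pi.sub_apply]
  rw [Finset.sum_congr rfl hrotation, hfract, Finset.sum_add_distrib, sum_range_natCast_div hm,
    Finset.sum_const, Finset.card_range, nsmul_eq_mul, add_sub_cancel_left]

end HermiteIdentity

theorem measurePreserving_equivIco_unitAddCircle :
    MeasurePreserving (fun t : UnitAddCircle => (AddCircle.equivIco 1 0 t : ℝ)) volume
      (volume.restrict (Set.Icc 0 1)) := by
  have hmeas : Measurable fun t : UnitAddCircle => (AddCircle.equivIco 1 0 t : ℝ) :=
    (AddCircle.measurableEquivIco 1 0).measurable.subtype_val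
  have hmk : MeasurePreserving ((↑) : ℝ → UnitAddCircle) (volume.restrict (Set.Ico 0 1)) := by
    simpa [restrict_Ico_eq_restrict_Ioc] using UnitAddCircle.measurePreserving_mk 0
  refine ⟨hmeas, ?_⟩
  rw [← restrict_Ico_eq_restrict_Icc, ← hmk.map_eq, Measure.map_map hmeas hmk.measurable]
  refine (Measure.map_congr ?_).trans Measure.map_id
  filter_upwards [ae_restrict_mem measurableSet_Ico] with x hx
  exact AddCircle.equivIco_coe_of_mem (by rwa [zero_add])

theorem measurePreserving_fract_intCast_mul_add {k : ℤ} (hk : k ≠ 0) (c : ℝ) :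
    MeasurePreserving (fun x : ℝ => Int.fract (k * x + c))
      (volume.restrict (Set.Icc 0 1)) (volume.restrict (Set.Icc 0 1)) := by
  have hmk : MeasurePreserving ((↑) : ℝ → UnitAddCircle) (volume.restrict (Set.Icc 0 1)) := by
    simpa [restrict_Ioc_eq_restrict_Icc] using UnitAddCircle.measurePreserving_mk 0
  have hcircle : MeasurePreserving (fun t : UnitAddCircle => k • t + (c : UnitAddCircle)) :=
    (measurePreserving_add_right volume _).comp (Measure.measurePreserving_zsmul volume hk)
  convert measurePreserving_equivIco_unitAddCircle.comp (hcircle.comp hmk) using 2 with x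
  rw [Function.comp_apply, Function.comp_apply, ← AddCircle.coe_zsmul, ← AddCircle.coe_add,
    AddCircle.coe_equivIco_mk_apply, div_one, mul_one, zsmul_eq_mul]

theorem measurePreserving_add_sub_restrict_Icc (a b : ℝ) :
    MeasurePreserving (fun x => a + b - x)
      (volume.restrict (Set.Icc a b)) (volume.restrict (Set.Icc a b)) := by
  simpa using (Measure.measurePreserving_sub_left volume (a + b)).restrict_preimage
    (measurableSet_Icc (a := a) (b := b))

theorem measurePreserving_const_mul_restrict_Icc {c : ℝ} (hc : 0 < c) (a b : ℝ) :
    MeasurePreserving (fun x => c * x) (volume.restrict (Set.Icc a b))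
      (ENNReal.ofReal c⁻¹ • volume.restrict (Set.Icc (c * a) (c * b))) := by
  have hscale : MeasurePreserving (fun x : ℝ => c * x) volume (ENNReal.ofReal c⁻¹ • volume) :=
    ⟨measurable_const_mul c, by rw [Real.map_volume_mul_left hc.ne', abs_of_pos (inv_pos.2 hc)]⟩
  simpa [Set.preimage_const_mul_Icc₀ _ _ hc, hc.ne'] using
    hscale.restrict_preimage (measurableSet_Icc (a := c * a) (b := c * b))

/-- The `m` rotations of the circle point `x` by the multiples of `1 / m`, followed by the
reflected `m`-fold multiple of `x`; points of the circle are represented in `[0, 1)`. For `m ≠ 0`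
and `x` uniform this is a coupling of `m + 1` uniform variables with constant sum. -/
noncomputable def rotationCoupling (m : ℕ) (x : ℝ) : Fin (m + 1) → ℝ :=
  Fin.snoc (fun k : Fin m => Int.fract (x + k / m)) (1 - Int.fract (m * x))

namespace rotationCoupling

theorem apply_mem_Icc (m : ℕ) (x : ℝ) (i : Fin (m + 1)) :
    rotationCoupling m x i ∈ Set.Icc 0 1 := by
  have hfract (y : ℝ) : Int.fract y ∈ Set.Icc 0 1 :=
    ⟨Int.fract_nonneg y, (Int.fract_lt_one y).le⟩
  cases i using Fin.lastCases with
  | last => simpa [rotationCoupling] using hfract (m * x)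
  | cast k => simpa [rotationCoupling] using hfract (x + k / m)

variable {m : ℕ}

theorem sum_apply (hm : m ≠ 0) (x : ℝ) : ∑ i, rotationCoupling m x i = (m + 1) / 2 := by
  simp only [rotationCoupling, Fin.sum_univ_castSucc, Fin.snoc_castSucc, Fin.snoc_last]
  rw [Fin.sum_univ_eq_sum_range (fun k => Int.fract (x + (k : ℝ) / m)), sum_range_fract_add_div hm]
  ring

theorem measurePreserving_apply (hm : m ≠ 0) (i : Fin (m + 1)) :
    MeasurePreserving (fun x => rotationCoupling m x i)
      (volume.restrict (Set.Icc 0 1)) (volume.restrict (Set.Icc 0 1)) := by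
  cases i using Fin.lastCases with
  | last =>
    simpa [rotationCoupling, Function.comp_def] using
      (measurePreserving_add_sub_restrict_Icc 0 1).comp
        (measurePreserving_fract_intCast_mul_add (Nat.cast_ne_zero.2 hm) 0)
  | cast k =>
    simpa [rotationCoupling] using measurePreserving_fract_intCast_mul_add one_ne_zero (k / m)

theorem measurePreserving_const_mul_apply (hm : m ≠ 0) {c : ℝ} (hc : 0 < c) (i : Fin (m + 1)) :
    MeasurePreserving (fun x => c * rotationCoupling m x i)
      (volume.restrict (Set.Icc 0 1)) (ENNReal.ofReal c⁻¹ • volume.restrict (Set.Icc 0 c)) := by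
  simpa [Function.comp_def] using
    (measurePreserving_const_mul_restrict_Icc hc 0 1).comp (measurePreserving_apply hm i)

end rotationCoupling

/-- For every integer `n ≥ 2` there exists a probability measure `μ` on `ℝⁿ` such that
`μ`-almost surely the coordinates satisfy `bᵢ ∈ [0, 2/n]` for all `i` and `∑ bᵢ = 1`,
and each coordinate projection pushes `μ` forward to the uniform distribution on
`[0, 2/n]`. -/
theorem stmt_5 (n : ℕ) (hn : 2 ≤ n) :
    ∃ μ : Measure (Fin n → ℝ), IsProbabilityMeasure μ ∧
      (∀ᵐ b ∂μ, (∀ i, b i ∈ Set.Icc (0 : ℝ) (2 / n)) ∧ ∑ i, b i = 1) ∧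
      (∀ i, Measure.map (fun b => b i) μ
        = ENNReal.ofReal ((n : ℝ) / 2) • volume.restrict (Set.Icc (0 : ℝ) (2 / n))) := by
  obtain ⟨m, rfl⟩ := Nat.exists_eq_add_of_le' (one_le_two.trans hn)
  have hm : m ≠ 0 := by omega
  set c : ℝ := 2 / (m + 1 : ℕ) with hc_def
  have hc : 0 < c := by positivity
  let bids (x : ℝ) (i : Fin (m + 1)) : ℝ := c * rotationCoupling m x i
  have hmarginal := rotationCoupling.measurePreserving_const_mul_apply hm hc
  have hbids : Measurable bids := measurable_pi_lambda _ fun i => (hmarginal i).measurable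
  have : IsProbabilityMeasure (volume.restrict (Set.Icc (0 : ℝ) 1)) := ⟨by simp⟩
  refine ⟨Measure.map bids (volume.restrict (Set.Icc 0 1)),
    Measure.isProbabilityMeasure_map hbids.aemeasurable, ?_, fun i => ?_⟩
  · rw [ae_map_iff hbids.aemeasurable (by measurability)]
    refine .of_forall fun x => ⟨fun i => ?_, ?_⟩
    · obtain ⟨hnonneg, hle_one⟩ := rotationCoupling.apply_mem_Icc m x i
      exact ⟨mul_nonneg hc.le hnonneg, mul_le_of_le_one_right hc.le hle_one⟩
    · rw [← Finset.mul_sum, rotationCoupling.sum_apply hm, hc_def]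
      push_cast
      field_simp
  · rw [Measure.map_map (measurable_pi_apply i) hbids]
    exact (hmarginal i).map_eq.trans (by rw [hc_def, inv_div])
end

section
/- Let k ≥ 2 be an integer and set c = 1/(k−1). Let Δ = {(b_1, …, b_{k−1}) ∈ ℝ^{k−1} : b_i > 0 for all i and b_1 + ⋯ + b_{k−1} < 1}, and write b_k = 1 − (b_1 + ⋯ + b_{k−1}). Then the integral α = ∫_Δ (b_1 b_2 ⋯ b_{k−1} b_k)^{c−1} d(b_1,…,b_{k−1}) is finite and positive, and for every a ∈ [0,1], ∫_{Δ ∩ {b_k ≤ a}} (b_1 b_2 ⋯ b_{k−1} b_k)^{c−1} d(b_1,…,b_{k−1}) = a^c · α. -/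
open MeasureTheory

/-! The weight `w b = ∏ bᵢ^(sᵢ - 1)` on the open orthant is homogeneous, so with `σ = ∑ sᵢ` the
dilation by `t` gives the simplex `{∑ bᵢ < t}` the mass `t^σ · V`, where `V` is the mass of
`{∑ bᵢ < 1}`. Hence the image of `w b db` under `b ↦ ∑ bᵢ` has density `σ V u^(σ - 1)` on `(0, ∞)`,
which is Liouville's extension of Dirichlet's integral. In the theorem `σ = 1`: the sum has constant
density `V` and integrating `(1 - u)^(c - 1)` over `1 - a ≤ u < 1` gives `V · a^c / c`. -/

open Set
open scoped Pointwise

theorem measure_ext_of_Iio {α : Type*} [TopologicalSpace α] [SecondCountableTopology α]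
    [LinearOrder α] [OrderTopology α] [NoMaxOrder α] [MeasurableSpace α] [BorelSpace α]
    {μ ν : Measure α} (hμ : ∀ t, μ (Iio t) ≠ ⊤) (h : ∀ t, μ (Iio t) = ν (Iio t)) : μ = ν := by
  cases isEmpty_or_nonempty α
  · exact Subsingleton.elim _ _
  obtain ⟨x, hx⟩ := Filter.exists_seq_tendsto (Filter.atTop : Filter α)
  refine Measure.ext_of_generateFrom_of_iUnion (range Iio) (fun n ↦ Iio (x n))
    (borel_eq_generateFrom_Iio α ▸ BorelSpace.measurable_eq) isPiSystem_Iio ?_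
    (fun n ↦ mem_range_self _) (fun n ↦ hμ _) (forall_mem_range.2 h)
  exact iUnion_eq_univ_iff.2 fun y ↦ (hx.eventually_gt_atTop y).exists

theorem integrableOn_Ioo_rpow_sub_one {r : ℝ} (hr : 0 < r) (t : ℝ) :
    IntegrableOn (fun u : ℝ ↦ u ^ (r - 1)) (Ioo 0 t) := by
  rcases le_total 0 t with ht | ht
  · exact (intervalIntegrable_iff_integrableOn_Ioo_of_le ht).1
      (intervalIntegral.intervalIntegrable_rpow' (by linarith))
  · simp [Ioo_eq_empty_of_le ht]

theorem setIntegral_Ioo_rpow_sub_one {r : ℝ} (hr : 0 < r) {t : ℝ} (ht : 0 ≤ t) :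
    ∫ u in Ioo 0 t, u ^ (r - 1) = t ^ r / r := by
  rw [← integral_Ioc_eq_integral_Ioo, ← intervalIntegral.integral_of_le ht,
    integral_rpow (.inl (by linarith)), sub_add_cancel, Real.zero_rpow hr.ne', sub_zero]

theorem setIntegral_Ico_one_sub_rpow_sub_one {r : ℝ} (hr : 0 < r) {a : ℝ} (ha : 0 ≤ a) :
    ∫ u in Ico (1 - a) 1, (1 - u) ^ (r - 1) = a ^ r / r := by
  rw [integral_Ico_eq_integral_Ioo, ← integral_Ioc_eq_integral_Ioo,
    ← intervalIntegral.integral_of_le (by linarith),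
    intervalIntegral.integral_comp_sub_left (fun u ↦ u ^ (r - 1)), sub_self, sub_sub_cancel,
    intervalIntegral.integral_of_le ha, integral_Ioc_eq_integral_Ioo,
    setIntegral_Ioo_rpow_sub_one hr ha]

section Dirichlet

/-- The open positive orthant of `ℝ^ι`. -/
def openOrthant (ι : Type*) : Set (ι → ℝ) := {b | ∀ i, 0 < b i}

theorem isOpen_openOrthant {ι : Type*} [Finite ι] : IsOpen (openOrthant ι) := by
  simpa only [openOrthant, ofPred_forall] using
    isOpen_iInter_of_finite fun i ↦ isOpen_lt continuous_const (continuous_apply i)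

variable {ι : Type*} [Fintype ι]

variable (ι) in
/-- The open solid simplex of size `t`: the points of the positive orthant with coordinate sum less
than `t`. For `t = 1` these are the points of the open standard simplex with one more coordinate,
whose last coordinate `1 - ∑ i, b i` is left out. -/
def solidSimplex (t : ℝ) : Set (ι → ℝ) := {b | (∀ i, 0 < b i) ∧ ∑ i, b i < t}

/-- The Dirichlet weight `∏ bᵢ^(sᵢ - 1)` with exponents `s`, meant for `b` in the positive
orthant. -/
noncomputable def dirichletWeight (s b : ι → ℝ) : ℝ := ∏ i, b i ^ (s i - 1)

theorem isOpen_solidSimplex (t : ℝ) : IsOpen (solidSimplex ι t) :=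
  isOpen_openOrthant.inter <|
    isOpen_lt (f := fun b : ι → ℝ ↦ ∑ i, b i) (by fun_prop) continuous_const

theorem solidSimplex_nonempty {t : ℝ} (ht : 0 < t) : (solidSimplex ι t).Nonempty := by
  refine ⟨fun _ ↦ t / (Fintype.card ι + 1), fun _ ↦ by positivity, ?_⟩
  rw [Finset.sum_const, Finset.card_univ, nsmul_eq_mul, mul_div_assoc', div_lt_iff₀ (by positivity)]
  linarith

theorem solidSimplex_eq_empty {t : ℝ} (ht : t ≤ 0) : solidSimplex ι t = ∅ :=
  eq_empty_of_forall_notMem fun _ hb ↦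
    (hb.2.trans_le ht).not_ge (Finset.sum_nonneg fun i _ ↦ (hb.1 i).le)

theorem solidSimplex_subset_pi_Ioo (t : ℝ) : solidSimplex ι t ⊆ univ.pi fun _ ↦ Ioo 0 t :=
  fun _ hb i _ ↦ ⟨hb.1 i,
    (Finset.single_le_sum (fun j _ ↦ (hb.1 j).le) (Finset.mem_univ i)).trans_lt hb.2⟩

theorem smul_solidSimplex_one {t : ℝ} (ht : 0 < t) : t • solidSimplex ι 1 = solidSimplex ι t := by
  ext b
  simp only [mem_smul_set_iff_inv_smul_mem₀ ht.ne', solidSimplex, mem_ofPred_eq, Pi.smul_apply,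
    smul_eq_mul, ← Finset.mul_sum, mul_pos_iff_of_pos_left (inv_pos.2 ht), inv_mul_lt_one₀ ht]

variable {s : ι → ℝ}

@[fun_prop]
theorem measurable_dirichletWeight : Measurable (dirichletWeight s) := by
  unfold dirichletWeight
  fun_prop

theorem dirichletWeight_pos {b : ι → ℝ} (hb : b ∈ openOrthant ι) : 0 < dirichletWeight s b :=
  Finset.prod_pos fun i _ ↦ Real.rpow_pos_of_pos (hb i) _

theorem dirichletWeight_smul {t : ℝ} (ht : 0 < t) {b : ι → ℝ} (hb : b ∈ openOrthant ι) :
    dirichletWeight s (t • b) = t ^ (∑ i, s i - Fintype.card ι) * dirichletWeight s b := by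
  simp only [dirichletWeight, Pi.smul_apply, smul_eq_mul, Real.mul_rpow ht.le (hb _).le,
    Finset.prod_mul_distrib, ← Real.rpow_sum_of_pos ht, Finset.sum_sub_distrib, Finset.sum_const,
    Finset.card_univ, nsmul_eq_mul, mul_one]

theorem integrableOn_dirichletWeight (hs : ∀ i, 0 < s i) (t : ℝ) :
    IntegrableOn (dirichletWeight s) (solidSimplex ι t) := by
  refine IntegrableOn.mono_set ?_ (solidSimplex_subset_pi_Ioo t)
  rw [IntegrableOn, volume_pi, Measure.restrict_pi_pi]
  exact .fintype_prod fun i ↦ integrableOn_Ioo_rpow_sub_one (hs i) t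

theorem setIntegral_dirichletWeight_pos (hs : ∀ i, 0 < s i) :
    0 < ∫ b in solidSimplex ι 1, dirichletWeight s b := by
  have weight_pos : ∀ b ∈ solidSimplex ι 1, 0 < dirichletWeight s b :=
    fun _ hb ↦ dirichletWeight_pos hb.1
  have simplex_subset_support : solidSimplex ι 1 ⊆ Function.support (dirichletWeight s) :=
    fun b hb ↦ (weight_pos b hb).ne'
  rw [setIntegral_pos_iff_support_of_nonneg_ae
    (ae_restrict_of_forall_mem (isOpen_solidSimplex 1).measurableSet fun b hb ↦
      (weight_pos b hb).le) (integrableOn_dirichletWeight hs 1),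
    inter_eq_right.2 simplex_subset_support]
  exact (isOpen_solidSimplex 1).measure_pos _ (solidSimplex_nonempty one_pos)

theorem setIntegral_dirichletWeight_solidSimplex {t : ℝ} (ht : 0 < t) :
    ∫ b in solidSimplex ι t, dirichletWeight s b =
      t ^ (∑ i, s i) * ∫ b in solidSimplex ι 1, dirichletWeight s b := by
  have dilation := Measure.setIntegral_comp_smul_of_pos volume (dirichletWeight s)
    (solidSimplex ι 1) ht
  rw [smul_solidSimplex_one ht, Module.finrank_fintype_fun_eq_card, smul_eq_mul,
    eq_inv_mul_iff_mul_eq₀ (by positivity),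
    setIntegral_congr_fun (isOpen_solidSimplex 1).measurableSet fun b hb ↦
      dirichletWeight_smul ht hb.1, integral_const_mul, ← mul_assoc, ← Real.rpow_natCast,
    ← Real.rpow_add ht, add_sub_cancel] at dilation
  exact dilation.symm

variable (s) in
/-- The measure with density `dirichletWeight s` on the positive orthant. -/
noncomputable def dirichletMeasure : Measure (ι → ℝ) :=
  (volume.restrict (openOrthant ι)).withDensity fun b ↦ ENNReal.ofReal (dirichletWeight s b)

theorem integral_dirichletMeasure (g : (ι → ℝ) → ℝ) :
    ∫ b, g b ∂dirichletMeasure s = ∫ b in openOrthant ι, dirichletWeight s b * g b := by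
  rw [dirichletMeasure, integral_withDensity_eq_integral_toReal_smul (by fun_prop) (by simp)]
  refine setIntegral_congr_fun isOpen_openOrthant.measurableSet fun b hb ↦ ?_
  simp only [ENNReal.toReal_ofReal (dirichletWeight_pos hb).le, smul_eq_mul]

theorem dirichletMeasure_sum_lt (hs : ∀ i, 0 < s i) (t : ℝ) :
    dirichletMeasure s {b | ∑ i, b i < t} =
      ENNReal.ofReal (∫ b in solidSimplex ι t, dirichletWeight s b) := by
  have measurableSet_sum_lt : MeasurableSet {b : ι → ℝ | ∑ i, b i < t} :=
    measurableSet_lt (by fun_prop) measurable_const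
  have solidSimplex_eq_inter : {b | ∑ i, b i < t} ∩ openOrthant ι = solidSimplex ι t :=
    inter_comm _ _
  rw [dirichletMeasure, withDensity_apply _ measurableSet_sum_lt,
    Measure.restrict_restrict measurableSet_sum_lt, solidSimplex_eq_inter,
    ofReal_integral_eq_lintegral_ofReal (integrableOn_dirichletWeight hs t)]
  exact ae_restrict_of_forall_mem (isOpen_solidSimplex t).measurableSet fun b hb ↦
    (dirichletWeight_pos hb.1).le

theorem withDensity_rpow_sub_one_Iio {r : ℝ} (hr : 0 < r) {t : ℝ} (ht : 0 ≤ t) :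
    (volume.restrict (Ioi (0 : ℝ))).withDensity (fun u ↦ ENNReal.ofReal (u ^ (r - 1))) (Iio t) =
      ENNReal.ofReal (t ^ r / r) := by
  rw [withDensity_apply _ measurableSet_Iio, Measure.restrict_restrict measurableSet_Iio,
    Iio_inter_Ioi, ← setIntegral_Ioo_rpow_sub_one hr ht,
    ofReal_integral_eq_lintegral_ofReal (integrableOn_Ioo_rpow_sub_one hr t)]
  exact ae_restrict_of_forall_mem measurableSet_Ioo fun u hu ↦ Real.rpow_nonneg hu.1.le _

theorem map_sum_dirichletMeasure [Nonempty ι] (hs : ∀ i, 0 < s i) :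
    (dirichletMeasure s).map (fun b ↦ ∑ i, b i) =
      ENNReal.ofReal ((∑ i, s i) * ∫ b in solidSimplex ι 1, dirichletWeight s b) •
        (volume.restrict (Ioi 0)).withDensity fun u ↦ ENNReal.ofReal (u ^ (∑ i, s i - 1)) := by
  have sum_pos : 0 < ∑ i, s i := Finset.sum_pos (fun i _ ↦ hs i) Finset.univ_nonempty
  have map_Iio (t : ℝ) : (dirichletMeasure s).map (fun b ↦ ∑ i, b i) (Iio t) =
      ENNReal.ofReal (∫ b in solidSimplex ι t, dirichletWeight s b) := by
    rw [Measure.map_apply (by fun_prop) measurableSet_Iio]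
    exact dirichletMeasure_sum_lt hs t
  refine measure_ext_of_Iio (fun t ↦ map_Iio t ▸ ENNReal.ofReal_ne_top) fun t ↦ ?_
  rw [map_Iio, Measure.smul_apply, smul_eq_mul]
  rcases le_or_gt t 0 with ht | ht
  · rw [solidSimplex_eq_empty ht, withDensity_apply _ measurableSet_Iio,
      Measure.restrict_restrict measurableSet_Iio, Iio_inter_Ioi, Ioo_eq_empty_of_le ht]
    simp
  · rw [withDensity_rpow_sub_one_Iio sum_pos ht.le, setIntegral_dirichletWeight_solidSimplex ht,
      ← ENNReal.ofReal_mul (mul_pos sum_pos (setIntegral_dirichletWeight_pos hs)).le]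
    congr 1
    field_simp

theorem integral_dirichletWeight_mul_comp_sum [Nonempty ι] (hs : ∀ i, 0 < s i) {g : ℝ → ℝ}
    (hg : Measurable g) :
    ∫ b in openOrthant ι, dirichletWeight s b * g (∑ i, b i) =
      ((∑ i, s i) * ∫ b in solidSimplex ι 1, dirichletWeight s b) *
        ∫ u in Ioi (0 : ℝ), u ^ (∑ i, s i - 1) * g u := by
  have mass_nonneg : 0 ≤ (∑ i, s i) * ∫ b in solidSimplex ι 1, dirichletWeight s b :=
    mul_nonneg (Finset.sum_nonneg fun i _ ↦ (hs i).le) (setIntegral_dirichletWeight_pos hs).le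
  rw [← integral_dirichletMeasure,
    ← integral_map (φ := fun b : ι → ℝ ↦ ∑ i, b i) (by fun_prop) hg.aestronglyMeasurable,
    map_sum_dirichletMeasure hs, integral_smul_measure, ENNReal.toReal_ofReal mass_nonneg,
    smul_eq_mul, integral_withDensity_eq_integral_toReal_smul (by fun_prop) (by simp)]
  congr 1
  refine setIntegral_congr_fun measurableSet_Ioi fun u hu ↦ ?_
  simp only [ENNReal.toReal_ofReal (Real.rpow_nonneg (mem_Ioi.1 hu).le _), smul_eq_mul]

theorem setIntegral_dirichletWeight_mul_one_sub_sum_rpow (hs : ∀ i, 0 < s i)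
    (hsum : ∑ i, s i = 1) {c : ℝ} (hc : 0 < c) {a : ℝ} (ha : a ∈ Icc (0 : ℝ) 1) :
    ∫ b in solidSimplex ι 1 ∩ {b | 1 - ∑ i, b i ≤ a},
        dirichletWeight s b * (1 - ∑ i, b i) ^ (c - 1) =
      (∫ b in solidSimplex ι 1, dirichletWeight s b) * (a ^ c / c) := by
  have : Nonempty ι := not_isEmpty_iff.1 fun _ ↦ by simp at hsum
  let g : ℝ → ℝ := (Ico (1 - a) 1).indicator fun u ↦ (1 - u) ^ (c - 1)
  have g_measurable : Measurable g := Measurable.indicator (by fun_prop) measurableSet_Ico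
  have slab_measurable : MeasurableSet {b : ι → ℝ | ∑ i, b i ∈ Ico (1 - a) 1} :=
    measurableSet_Ico.preimage (f := fun b : ι → ℝ ↦ ∑ i, b i) (by fun_prop)
  have slice_eq : solidSimplex ι 1 ∩ {b | 1 - ∑ i, b i ≤ a} =
      openOrthant ι ∩ {b | ∑ i, b i ∈ Ico (1 - a) 1} := by
    ext b
    simp only [solidSimplex, openOrthant, mem_inter_iff, mem_ofPred_eq, mem_Ico,
      sub_le_comm (b := ∑ i, b i)]
    tauto
  have Ico_subset_Ici : Ico (1 - a) 1 ⊆ Ici 0 := fun u hu ↦ (sub_nonneg.2 ha.2).trans hu.1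
  calc
    _ = ∫ b in openOrthant ι, dirichletWeight s b * g (∑ i, b i) := by
      rw [slice_eq, ← setIntegral_indicator slab_measurable]
      congr 1 with b
      simp only [g, indicator_apply, mem_ofPred_eq, mul_ite, mul_zero]
    _ = (∫ b in solidSimplex ι 1, dirichletWeight s b) * ∫ u in Ioi 0, g u := by
      simp only [integral_dirichletWeight_mul_comp_sum hs g_measurable, hsum, sub_self,
        Real.rpow_zero, one_mul]
    _ = (∫ b in solidSimplex ι 1, dirichletWeight s b) * (a ^ c / c) := by
      rw [← integral_Ici_eq_integral_Ioi, setIntegral_indicator measurableSet_Ico,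
        inter_eq_right.2 Ico_subset_Ici, setIntegral_Ico_one_sub_rpow_sub_one hc ha.1]

theorem prod_mul_one_sub_sum_rpow {b : ι → ℝ} (hb : b ∈ solidSimplex ι 1) (r : ℝ) :
    ((∏ i, b i) * (1 - ∑ i, b i)) ^ r = (∏ i, b i ^ r) * (1 - ∑ i, b i) ^ r := by
  rw [Real.mul_rpow (Finset.prod_nonneg fun i _ ↦ (hb.1 i).le) (sub_nonneg.2 hb.2.le),
    Real.finsetProd_rpow _ _ fun i _ ↦ (hb.1 i).le]

theorem stmt_7_general (hs : ∀ i, 0 < s i) (hsum : ∑ i, s i = 1) {c : ℝ} (hc : 0 < c)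
    {f : (ι → ℝ) → ℝ}
    (hf : ∀ b ∈ solidSimplex ι 1, f b = (∏ i, b i ^ (s i - 1)) * (1 - ∑ i, b i) ^ (c - 1)) :
    IntegrableOn f (solidSimplex ι 1) ∧ 0 < ∫ b in solidSimplex ι 1, f b ∧
      ∀ a ∈ Icc (0 : ℝ) 1,
        ∫ b in solidSimplex ι 1 ∩ {b | 1 - ∑ i, b i ≤ a}, f b =
          a ^ c * ∫ b in solidSimplex ι 1, f b := by
  have slice_integral : ∀ a ∈ Icc (0 : ℝ) 1,
      ∫ b in solidSimplex ι 1 ∩ {b | 1 - ∑ i, b i ≤ a}, f b =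
        (∫ b in solidSimplex ι 1, dirichletWeight s b) * (a ^ c / c) := fun a ha ↦ by
    rw [← setIntegral_dirichletWeight_mul_one_sub_sum_rpow hs hsum hc ha]
    exact setIntegral_congr_fun ((isOpen_solidSimplex 1).measurableSet.inter
      (measurableSet_le (by fun_prop) measurable_const)) fun b hb ↦ hf b hb.1
  have total_integral : ∫ b in solidSimplex ι 1, f b =
      (∫ b in solidSimplex ι 1, dirichletWeight s b) * (1 / c) := by
    have slice_one : solidSimplex ι 1 ∩ {b | 1 - ∑ i, b i ≤ 1} = solidSimplex ι 1 :=
      inter_eq_left.2 fun b hb ↦ sub_le_self _ (Finset.sum_nonneg fun i _ ↦ (hb.1 i).le)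
    rw [← slice_one, slice_integral 1 ⟨zero_le_one, le_rfl⟩, slice_one, Real.one_rpow]
  have total_pos : 0 < ∫ b in solidSimplex ι 1, f b :=
    total_integral ▸ mul_pos (setIntegral_dirichletWeight_pos hs) (one_div_pos.2 hc)
  refine ⟨.of_integral_ne_zero total_pos.ne', total_pos, fun a ha ↦ ?_⟩
  rw [slice_integral a ha, total_integral]
  ring

end Dirichlet

/-- Let `k ≥ 2`, `c = 1/(k−1)`, and let
`Δ = {(b₁,…,b_{k−1}) : bᵢ > 0 and b₁ + ⋯ + b_{k−1} < 1}` with `b_k = 1 − (b₁ + ⋯ + b_{k−1})`.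
Then `α = ∫_Δ (b₁⋯b_{k−1}·b_k)^(c−1)` is finite (the integrand is integrable on `Δ`) and
positive, and for every `a ∈ [0,1]`,
`∫_{Δ ∩ {b_k ≤ a}} (b₁⋯b_{k−1}·b_k)^(c−1) = a^c · α`. -/
theorem stmt_7 (k : ℕ) (hk : 2 ≤ k)
    (c : ℝ) (hc : c = 1 / ((k : ℝ) - 1))
    (Δ : Set (Fin (k - 1) → ℝ))
    (hΔ : Δ = {b | (∀ i, 0 < b i) ∧ ∑ i, b i < 1})
    (f : (Fin (k - 1) → ℝ) → ℝ)
    (hf : ∀ b, f b = ((∏ i, b i) * (1 - ∑ i, b i)) ^ (c - 1)) :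
    IntegrableOn f Δ ∧ 0 < ∫ b in Δ, f b ∧
      ∀ a ∈ Set.Icc (0 : ℝ) 1,
        ∫ b in Δ ∩ {b | 1 - ∑ i, b i ≤ a}, f b = a ^ c * ∫ b in Δ, f b := by
  have hk' : (0 : ℝ) < k - 1 := sub_pos.2 (by exact_mod_cast hk)
  have exponents_sum : ∑ _i : Fin (k - 1), c = 1 := by
    rw [Finset.sum_const, Finset.card_fin, nsmul_eq_mul, Nat.cast_pred (by lia), hc,
      mul_one_div_cancel hk'.ne']
  have c_pos : 0 < c := hc ▸ one_div_pos.2 hk'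
  subst hΔ
  exact stmt_7_general (fun _ ↦ c_pos) exponents_sum c_pos fun b hb ↦
    (hf b).trans (prod_mul_one_sub_sum_rpow hb (c - 1))
end

section
/- Let n ≥ k ≥ 2 be integers and set β = ∑_{i=1}^n i^{k−1}. Let a_1, …, a_n be positive real numbers with a_1 + ⋯ + a_n ≤ 1, and for each i let m_i be the number of indices j ∈ {1, …, n} with j^{k−1} < β·a_i. Then ∑_{i=1}^n m_i^{k−1} ≤ β − 1. -/
/-!
If a bid `x` beats `m > 0` of the bids `f j` at positive indices, then the largest index `j` it
beats is at least `m`, so `f m ≤ f j < x`. Summing over the bids bounds `∑ f (mᵢ)` by the budget,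
strictly; for integer values the strict bound saves `1`.
-/

theorem exists_mem_card_le {s : Finset ℕ} (hs : s.Nonempty) (h0 : 0 ∉ s) :
    ∃ j ∈ s, s.card ≤ j := by
  have hsub : s ⊆ Finset.Ioc 0 (s.max' hs) := fun j hj =>
    Finset.mem_Ioc.mpr ⟨Nat.pos_of_ne_zero (ne_of_mem_of_not_mem hj h0), s.le_max' j hj⟩
  exact ⟨s.max' hs, s.max'_mem hs, by simpa using Finset.card_le_card hsub⟩

section CountBelow

variable {R : Type*} [LinearOrder R] {f : ℕ → R} {s : Finset ℕ} {x : R}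

theorem apply_card_filter_lt_lt_of_nonempty (hf : Monotone f) (hs : 0 ∉ s)
    (hne : (s.filter (f · < x)).Nonempty) : f (s.filter (f · < x)).card < x := by
  obtain ⟨j, hj, hcard⟩ := exists_mem_card_le hne fun h => hs (Finset.mem_of_mem_filter 0 h)
  exact (hf hcard).trans_lt (Finset.mem_filter.mp hj).2

theorem apply_card_filter_lt_lt (hf : Monotone f) (hs : 0 ∉ s) (hx : f 0 < x) :
    f (s.filter (f · < x)).card < x := by
  rcases (s.filter (f · < x)).eq_empty_or_nonempty with hempty | hne
  · simpa only [hempty, Finset.card_empty] using hx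
  · exact apply_card_filter_lt_lt_of_nonempty hf hs hne

theorem apply_card_filter_lt_le (hf : Monotone f) (hs : 0 ∉ s) (hx : f 0 ≤ x) :
    f (s.filter (f · < x)).card ≤ x := by
  rcases (s.filter (f · < x)).eq_empty_or_nonempty with hempty | hne
  · simpa only [hempty, Finset.card_empty] using hx
  · exact (apply_card_filter_lt_lt_of_nonempty hf hs hne).le

end CountBelow

theorem stmt_13_general {ι R : Type*} [Fintype ι] [Semiring R] [LinearOrder R]
    [IsStrictOrderedRing R] {f : ℕ → R} (hf : Monotone f) (hf0 : f 0 ≤ 0)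
    {s : Finset ℕ} (hs : 0 ∉ s) {β : R} (hβ : 0 < β)
    {a : ι → R} (ha : ∀ i, 0 ≤ a i) (hsum : ∑ i, a i ≤ 1)
    {m : ι → ℕ} (hm : ∀ i, m i = (s.filter (f · < β * a i)).card) :
    ∑ i, f (m i) < β := by
  have hle (i : ι) : f (m i) ≤ β * a i :=
    hm i ▸ apply_card_filter_lt_le hf hs (hf0.trans (mul_nonneg hβ.le (ha i)))
  by_cases hpos : ∃ i, 0 < a i
  · obtain ⟨i, hi⟩ := hpos
    have hlt : f (m i) < β * a i :=
      hm i ▸ apply_card_filter_lt_lt hf hs (hf0.trans_lt (mul_pos hβ hi))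
    calc ∑ i, f (m i) < ∑ i, β * a i :=
          Finset.sum_lt_sum (fun j _ => hle j) ⟨i, Finset.mem_univ i, hlt⟩
      _ = β * ∑ i, a i := (Finset.mul_sum ..).symm
      _ ≤ β := mul_le_of_le_one_right hβ.le hsum
  · push Not at hpos
    have hnonpos (i : ι) : f (m i) ≤ 0 :=
      (hle i).trans (mul_nonpos_of_nonneg_of_nonpos hβ.le (hpos i))
    exact (Finset.sum_nonpos fun i _ => hnonpos i).trans_lt hβ

theorem sum_Icc_one_pow_pos {n : ℕ} (hn : 0 < n) (p : ℕ) : 0 < ∑ l ∈ Finset.Icc 1 n, l ^ p :=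
  Finset.sum_pos (fun _ hl => pow_pos (Finset.mem_Icc.mp hl).1 p) (Finset.nonempty_Icc.mpr hn)

/-- Let `n ≥ k ≥ 2` be integers and `β = ∑_{i=1}^n i^(k−1)`. Let `a₁, …, aₙ` be positive
reals with `∑ aᵢ ≤ 1`, and let `mᵢ` be the number of `j ∈ {1, …, n}` with `j^(k−1) < β·aᵢ`.
Then `∑ mᵢ^(k−1) ≤ β − 1`. -/
theorem stmt_13 (n k : ℕ) (hk : 2 ≤ k) (hn : k ≤ n)
    (β : ℕ) (hβ : β = ∑ l ∈ Finset.Icc 1 n, l ^ (k - 1))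
    (a : Fin n → ℝ) (ha : ∀ i, 0 < a i) (hsum : ∑ i, a i ≤ 1)
    (m : Fin n → ℕ)
    (hm : ∀ i, m i = ((Finset.Icc 1 n).filter
      (fun (j : ℕ) => (j : ℝ) ^ (k - 1) < (β : ℝ) * a i)).card) :
    ∑ i, (m i) ^ (k - 1) ≤ β - 1 := by
  have hβ_pos : 0 < β := hβ ▸ sum_Icc_one_pow_pos (by lia) (k - 1)
  have hmono : Monotone fun j : ℕ => (j : ℝ) ^ (k - 1) := fun _ _ h => by dsimp only; gcongr
  have hzero : ((0 : ℕ) : ℝ) ^ (k - 1) ≤ 0 := by rw [Nat.cast_zero, zero_pow (by lia)]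
  have hlt : ∑ i, (m i : ℝ) ^ (k - 1) < β :=
    stmt_13_general hmono hzero (by simp) (mod_cast hβ_pos) (fun i => (ha i).le) hsum hm
  exact Nat.le_sub_one_of_lt (mod_cast hlt)
end

section
/- Let n ≥ k ≥ 2 be integers and set β = ∑_{i=1}^n i^{k−1}. Then there exist positive real numbers a_1, …, a_n with a_1 + ⋯ + a_n ≤ 1 such that, defining m_i as the number of indices j ∈ {1, …, n} with j^{k−1} < β·a_i, one has ∑_{i=1}^n m_i^{k−1} = β − 1. -/
/-!
Against bids `f 1 < f 2 < ⋯ < f n`, an amount in the half-open interval `(f i, f (i + 1)]` beats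
exactly the `i` lowest ones. Give up one object by bidding `f 1 - (n - 1) * ε` on it and spend the
`n - 1` savings of `ε` on bidding `f j + ε` for each `j = 2, …, n`. For small `ε > 0` the first bid
beats nothing and the others beat `2, …, n` bids, so that only the contribution of `j = 1` is lost.
-/

open Finset

section LinearOrder

variable {α : Type*} [LinearOrder α] {f : ℕ → α}

lemma filter_Icc_lt_of_mem_Ioc (hf : StrictMono f) {i n : ℕ} (hi : i ≤ n) {b : α}
    (hb : b ∈ Set.Ioc (f i) (f (i + 1))) : {j ∈ Icc 1 n | f j < b} = Icc 1 i := by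
  have lt_iff_le (j : ℕ) : f j < b ↔ j ≤ i :=
    ⟨fun h ↦ Nat.lt_succ_iff.mp (hf.lt_iff_lt.mp (h.trans_le hb.2)),
      fun h ↦ (hf.monotone h).trans_lt hb.1⟩
  ext j
  simp only [mem_filter, mem_Icc, lt_iff_le]
  lia

lemma card_filter_Icc_lt_of_mem_Ioc (hf : StrictMono f) {i n : ℕ} (hi : i ≤ n) {b : α}
    (hb : b ∈ Set.Ioc (f i) (f (i + 1))) : #{j ∈ Icc 1 n | f j < b} = i := by
  simp [filter_Icc_lt_of_mem_Ioc hf hi hb]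

end LinearOrder

lemma sum_Icc_one_eq_add_sum_fin {M : Type*} [AddCommMonoid M] (w : ℕ → M) (n : ℕ) :
    ∑ l ∈ Icc 1 (n + 1), w l = w 1 + ∑ i : Fin n, w (i + 2) := by
  rw [← Ico_add_one_right_eq_Icc, sum_Ico_eq_sum_range, Nat.add_sub_cancel, sum_range,
    Fin.sum_univ_succ]
  simp [add_comm, add_left_comm]

/-- The adversary's bids against `f 1, …, f (n + 1)`: object `0` is sacrificed for `n * ε`, which
pays for raising each of `f 2, …, f (n + 1)` by `ε` on the other objects. -/
def overbid {R : Type*} [Ring R] (f : ℕ → R) (n : ℕ) (ε : R) : Fin (n + 1) → R :=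
  Fin.cons (f 1 - n * ε) fun i ↦ f (i + 2) + ε

lemma sum_overbid {R : Type*} [Ring R] (f : ℕ → R) (n : ℕ) (ε : R) :
    ∑ i, overbid f n ε i = ∑ l ∈ Icc 1 (n + 1), f l := by
  simp only [overbid, Fin.sum_univ_succ, Fin.cons_zero, Fin.cons_succ, sum_add_distrib,
    sum_const, card_univ, Fintype.card_fin, nsmul_eq_mul, sum_Icc_one_eq_add_sum_fin]
  abel

section OrderedField

variable {𝕜 : Type*} [Field 𝕜] [LinearOrder 𝕜] [IsStrictOrderedRing 𝕜] {f : ℕ → 𝕜}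

lemma exists_overbid_mem_Ioc (hf : StrictMono f) (n : ℕ) :
    ∃ ε, overbid f n ε 0 ∈ Set.Ioc (f 0) (f 1) ∧
      ∀ i : Fin n, overbid f n ε i.succ ∈ Set.Ioc (f (i + 2)) (f (i + 3)) := by
  obtain ⟨δ, hδ, hgap⟩ := Pi.exists_forall_pos_add_lt
    (fun i : Fin (n + 2) ↦ hf (Nat.lt_succ_self i))
  have hε : 0 < δ / (n + 1) := by positivity
  have hbudget : n * (δ / (n + 1)) + δ / (n + 1) = δ := by field_simp
  have hcost : 0 ≤ n * (δ / (n + 1)) := by positivity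
  refine ⟨δ / (n + 1), ?_, fun i ↦ ?_⟩
  · have hfirst : f 0 + δ < f 1 := hgap 0
    rw [overbid, Fin.cons_zero]
    constructor <;> linarith
  · have hnext : f (i + 2) + δ < f (i + 3) := hgap i.succ.succ
    rw [overbid, Fin.cons_succ]
    constructor <;> linarith

lemma exists_bids_card_filter_lt (hf : StrictMono f) (n : ℕ) :
    ∃ b : Fin (n + 1) → 𝕜, (∀ i, f 0 < b i) ∧ ∑ i, b i = ∑ l ∈ Icc 1 (n + 1), f l ∧
      #{j ∈ Icc 1 (n + 1) | f j < b 0} = 0 ∧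
      ∀ i : Fin n, #{j ∈ Icc 1 (n + 1) | f j < b i.succ} = i + 2 := by
  obtain ⟨ε, hzero, hsucc⟩ := exists_overbid_mem_Ioc hf n
  refine ⟨overbid f n ε, Fin.cases hzero.1 fun i ↦ ?_, sum_overbid f n ε,
    card_filter_Icc_lt_of_mem_Ioc hf (Nat.zero_le _) hzero,
    fun i ↦ card_filter_Icc_lt_of_mem_Ioc hf (by lia) (hsucc i)⟩
  exact (hf.monotone (Nat.zero_le _)).trans_lt (hsucc i).1

/-- Here `f j` are the (unnormalized) bids and `w m` is the payoff for beating exactly `m` of them;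
the lost payoff `w 1` stands on the left because `M` has no subtraction. -/
theorem stmt_14_general (hf : StrictMono f) (hf0 : 0 ≤ f 0) {M : Type*} [AddCommMonoid M]
    (w : ℕ → M) {n : ℕ} (hn : n ≠ 0) :
    ∃ a : Fin n → 𝕜, (∀ i, 0 < a i) ∧ ∑ i, a i = 1 ∧
      ∑ i, w #{j ∈ Icc 1 n | f j < (∑ l ∈ Icc 1 n, f l) * a i} + w 1
        = w 0 + ∑ l ∈ Icc 1 n, w l := by
  obtain ⟨n, rfl⟩ := Nat.exists_eq_succ_of_ne_zero hn
  obtain ⟨b, hb, hsum, hzero, hsucc⟩ := exists_bids_card_filter_lt hf n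
  have hpos (i) : 0 < b i := hf0.trans_lt (hb i)
  have htotal : 0 < ∑ i, b i := sum_pos (fun i _ ↦ hpos i) univ_nonempty
  refine ⟨fun i ↦ b i / ∑ i, b i, fun i ↦ div_pos (hpos i) htotal, ?_, ?_⟩
  · rw [← sum_div, div_self htotal.ne']
  · simp only [Nat.succ_eq_add_one, ← hsum, mul_div_cancel₀ _ htotal.ne']
    rw [Fin.sum_univ_succ, hzero, sum_Icc_one_eq_add_sum_fin]
    simp only [hsucc]
    abel

end OrderedField

/-- Let `n ≥ k ≥ 2` be integers and `β = ∑_{i=1}^n i^(k−1)`. Then there exist positive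
reals `a₁, …, aₙ` with `∑ aᵢ ≤ 1` such that, with `mᵢ` the number of `j ∈ {1, …, n}`
satisfying `j^(k−1) < β·aᵢ`, one has `∑ mᵢ^(k−1) = β − 1`. -/
theorem stmt_14 (n k : ℕ) (hk : 2 ≤ k) (hn : k ≤ n)
    (β : ℕ) (hβ : β = ∑ l ∈ Finset.Icc 1 n, l ^ (k - 1)) :
    ∃ a : Fin n → ℝ, (∀ i, 0 < a i) ∧ ∑ i, a i ≤ 1 ∧
      ∑ i, (((Finset.Icc 1 n).filter
          (fun (j : ℕ) => (j : ℝ) ^ (k - 1) < (β : ℝ) * a i)).card) ^ (k - 1)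
        = β - 1 := by
  have hk' : k - 1 ≠ 0 := by lia
  obtain ⟨a, ha, hsum, hwin⟩ := stmt_14_general (𝕜 := ℝ)
    (Nat.strictMono_cast.comp (Nat.pow_left_strictMono hk')) (Nat.cast_nonneg _)
    (fun j ↦ j ^ (k - 1)) (n := n) (by lia)
  refine ⟨a, ha, hsum.le, eq_tsub_of_add_eq ?_⟩
  simpa [hβ, hk'] using hwin
end
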